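/- Recovery sequence for affine limits (discrete form of Lemma 3.7 of the paper): assume Assumption H. For every F ∈ ℝ^{n×d} there exists a set Ω' ∈ ℱ with ℙ(Ω') = 1 such that for every ω ∈ Ω' and every half-open axis-parallel box A ⊂ ℝ^d there exists a family (u_ε)_{ε>0} of functions u_ε : εℤ^d → ℝⁿ with lim_{ε↓0} ε^d Σ_{z∈εℤ^d∩A} |u_ε(z) − Fz|^{pβ/(β+1)} = 0 and lim_{ε↓0} E_ε(ω;u_ε,A) = |A| · W₀(F). -/

import Mathlib

open MeasureTheory Filter Metric Set
open scoped Classical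
open scoped ENNReal Topology Pointwise

noncomputable section

namespace StochHom

/-- `ℝ^d` with the Euclidean norm. -/
abbrev Rd (d : ℕ) : Type := EuclideanSpace ℝ (Fin d)

/-- `ℝ^n` with the Euclidean norm. -/
abbrev Rn (n : ℕ) : Type := EuclideanSpace ℝ (Fin n)

/-- The lattice `ℤ^d`. -/
abbrev Zd (d : ℕ) : Type := Fin d → ℤ

variable {d n : ℕ}

/-- The embedding of the lattice `ℤ^d` into `ℝ^d`. -/
def toRd (z : Zd d) : Rd d := (EuclideanSpace.equiv (Fin d) ℝ).symm fun i => (z i : ℝ)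

/-- The standard basis vectors `eᵢ` of `ℤ^d`. -/
def stdb (i : Fin d) : Zd d := fun j => if j = i then 1 else 0

/-- The interaction range `R = max {4√d, max_{b ∈ ℰ₀} |b|}`. -/
def irange (d : ℕ) (E0 : Finset (Zd d)) : ℝ :=
  max (4 * Real.sqrt d) (sSup ((fun b : Zd d => ‖toRd b‖) '' (E0 : Set (Zd d))))

variable {Ω : Type*} [MeasurableSpace Ω]

/-- The energy `E₁(ω; u, ℤ^d ∩ A)`. -/
def energy1 (τ : Zd d → Ω → Ω) (E0 : Finset (Zd d)) (V : Zd d → Ω → Rn n → ℝ)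
    (ω : Ω) (u : Zd d → Rn n) (A : Set (Rd d)) : ℝ :=
  ∑' z : Zd d, if toRd z ∈ A then
      ∑ b ∈ E0, V b (τ z ω) ((‖toRd b‖)⁻¹ • (u (z + b) - u z)) else 0

/-- The scaled energy `E_ε(ω; u, A)`, where a function `u : εℤ^d → ℝ^n` is identified with a
function on `ℤ^d` via `z ↦ u(εz)`, so that `∂_b^ε u (z) = (u (z+b) - u z)/(ε |b|)`. -/
def energyE (τ : Zd d → Ω → Ω) (E0 : Finset (Zd d)) (V : Zd d → Ω → Rn n → ℝ)
    (ε : ℝ) (ω : Ω) (u : Zd d → Rn n) (A : Set (Rd d)) : ℝ :=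
  ε ^ d * ∑' z : Zd d, if ε • toRd z ∈ A then
      ∑ b ∈ E0, V b (τ z ω) ((ε * ‖toRd b‖)⁻¹ • (u (z + b) - u z)) else 0

/-- The localized minimal energy `m_F(ω; A)`. -/
def mF (τ : Zd d → Ω → Ω) (E0 : Finset (Zd d)) (V : Zd d → Ω → Rn n → ℝ)
    (ω : Ω) (F : Rd d →L[ℝ] Rn n) (A : Set (Rd d)) : ℝ :=
  ⨅ φ : {φ : Zd d → Rn n // ∀ z : Zd d, infDist (toRd z) Aᶜ ≤ irange d E0 → φ z = 0},
    energy1 τ E0 V ω (fun z => F (toRd z) + φ.1 z) A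

/-- The half-open cube `[0,k)^d ⊂ ℝ^d`. -/
def cube (d k : ℕ) : Set (Rd d) := {x | ∀ i, 0 ≤ x i ∧ x i < (k : ℝ)}

/-- The homogenized energy density `W₀(F) = inf_{k ≥ 1} k⁻ᵈ E[m_F(·, [0,k)^d)]`. -/
def W0 (P : Measure Ω) (τ : Zd d → Ω → Ω) (E0 : Finset (Zd d))
    (V : Zd d → Ω → Rn n → ℝ) (F : Rd d →L[ℝ] Rn n) : ℝ :=
  ⨅ k : {k : ℕ // 0 < k}, (((k : ℕ) : ℝ) ^ d)⁻¹ * ∫ ω, mF τ E0 V ω F (cube d k) ∂P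

/-- Half-open axis-parallel box `Π_i [aᵢ, bᵢ)`. -/
def halfBox (a b : Fin d → ℝ) : Set (Rd d) := {x | ∀ i, a i ≤ x i ∧ x i < b i}

/-- Open axis-parallel box `Π_i (aᵢ, bᵢ)`. -/
def openBox (a b : Fin d → ℝ) : Set (Rd d) := {x | ∀ i, a i < x i ∧ x i < b i}

/-- Closed axis-parallel box `Π_i [aᵢ, bᵢ]`. -/
def closedBox (a b : Fin d → ℝ) : Set (Rd d) := {x | ∀ i, a i ≤ x i ∧ x i ≤ b i}

/-- Half-open axis-parallel box with integer corners. -/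
def intBox (a b : Zd d) : Set (Rd d) := {x | ∀ i, (a i : ℝ) ≤ x i ∧ x i < (b i : ℝ)}

/-- The periodic cell minimization `W^{(k)}(ω; F)`. -/
def Wper (τ : Zd d → Ω → Ω) (E0 : Finset (Zd d)) (V : Zd d → Ω → Rn n → ℝ)
    (k : ℕ) (ω : Ω) (F : Rd d →L[ℝ] Rn n) : ℝ :=
  ⨅ φ : {φ : Zd d → Rn n // ∀ z z' : Zd d, φ (z + k • z') = φ z},
    ((k : ℝ) ^ d)⁻¹ * energy1 τ E0 V ω (fun z => F (toRd z) + φ.1 z) (cube d k)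


/-- Lattice points of the scaled box. -/
def Bx {d : ℕ} (ε : ℝ) (a b : Fin d → ℝ) : Finset (Zd d) :=
  Fintype.piFinset fun i => Finset.Ico ⌈a i / ε⌉ ⌈b i / ε⌉

/-- Volume of a box. -/
def vol {d : ℕ} (a b : Fin d → ℝ) : ℝ := ∏ i, max (b i - a i) 0

@[simp] lemma toRd_apply {d : ℕ} (z : Zd d) (i : Fin d) : toRd z i = (z i : ℝ) := rfl

lemma mem_Bx {d : ℕ} {ε : ℝ} (hε : 0 < ε) (a b : Fin d → ℝ) (z : Zd d) :
    z ∈ Bx ε a b ↔ ε • toRd z ∈ halfBox a b := by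
  simp only [Bx, Fintype.mem_piFinset, Finset.mem_Ico, halfBox, Set.mem_ofPred_eq, Int.ceil_le,
    Int.lt_ceil, PiLp.smul_apply, toRd_apply, smul_eq_mul, div_le_iff₀ hε, lt_div_iff₀ hε,
    mul_comm ε]

lemma tsum_Bx {d : ℕ} {ε : ℝ} (hε : 0 < ε) (a b : Fin d → ℝ) (g : Zd d → ℝ) :
    (∑' z : Zd d, if ε • toRd z ∈ halfBox a b then g z else 0) = ∑ z ∈ Bx ε a b, g z := by
  rw [tsum_eq_sum (s := Bx ε a b)]
  · refine Finset.sum_congr rfl fun z hz => ?_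
    rw [if_pos ((mem_Bx hε a b z).1 hz)]
  · intro z hz
    rw [if_neg (fun h => hz ((mem_Bx hε a b z).2 h))]

lemma volume_halfBox {d : ℕ} (a b : Fin d → ℝ) :
    (volume (halfBox a b)).toReal = vol a b := by
  have h : halfBox a b = (MeasurableEquiv.toLp 2 (Fin d → ℝ)).symm ⁻¹'
      (pi univ fun i => Ico (a i) (b i)) := by
    ext x
    simp [halfBox, Set.mem_pi]
  rw [h, (EuclideanSpace.volume_preserving_symm_measurableEquiv_toLp (Fin d)).measure_preimage
    (MeasurableSet.univ_pi fun i => measurableSet_Ico).nullMeasurableSet, Real.volume_pi_Ico,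
    ENNReal.toReal_prod]
  refine Finset.prod_congr rfl fun i _ => ?_
  rw [ENNReal.toReal_ofReal_eq_iff.2 (le_max_right _ _) |>.symm, ENNReal.ofReal_max]
  simp

lemma tendsto_ceil (x : ℝ) :
    Tendsto (fun ε : ℝ => ε * (⌈x / ε⌉ : ℝ)) (𝓝[>] 0) (𝓝 x) := by
  have h1 : Tendsto (fun ε : ℝ => x + ε) (𝓝[>] 0) (𝓝 x) := by
    have : Tendsto (fun ε : ℝ => x + ε) (𝓝 0) (𝓝 (x + 0)) := by
      exact (continuous_const.add continuous_id).tendsto _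
    rw [add_zero] at this
    exact this.mono_left nhdsWithin_le_nhds
  refine tendsto_of_tendsto_of_tendsto_of_le_of_le' tendsto_const_nhds h1 ?_ ?_
  · filter_upwards [self_mem_nhdsWithin] with ε (hε : 0 < ε)
    have := Int.le_ceil (x / ε)
    rw [div_le_iff₀ hε] at this
    linarith
  · filter_upwards [self_mem_nhdsWithin] with ε (hε : 0 < ε)
    have := (Int.ceil_lt_add_one (x / ε)).le
    have h2 := mul_le_mul_of_nonneg_left this hε.le
    have h3 : ε * (x / ε + 1) = x + ε := by field_simp
    linarith

lemma tendsto_len (x y : ℝ) :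
    Tendsto (fun ε : ℝ => ε * ((Finset.Ico ⌈x / ε⌉ ⌈y / ε⌉).card : ℝ)) (𝓝[>] 0)
      (𝓝 (max (y - x) 0)) := by
  have h := ((tendsto_ceil y).sub (tendsto_ceil x)).max (tendsto_const_nhds (x := (0 : ℝ)))
  refine h.congr' ?_
  filter_upwards [self_mem_nhdsWithin] with ε (hε : 0 < ε)
  rw [Int.card_Ico]
  have : (((⌈y / ε⌉ - ⌈x / ε⌉).toNat : ℕ) : ℝ) = max ((⌈y / ε⌉ : ℝ) - ⌈x / ε⌉) 0 := by
    have := Int.toNat_eq_max (⌈y / ε⌉ - ⌈x / ε⌉)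
    have h2 : (((⌈y / ε⌉ - ⌈x / ε⌉).toNat : ℤ) : ℝ) = ((max (⌈y / ε⌉ - ⌈x / ε⌉) 0 : ℤ) : ℝ) := by
      rw [this]
    push_cast at h2
    exact_mod_cast h2
  rw [this, mul_max_of_nonneg _ _ hε.le]
  ring_nf

lemma tendsto_card_Bx {d : ℕ} (a b : Fin d → ℝ) :
    Tendsto (fun ε : ℝ => ε ^ d * ((Bx ε a b).card : ℝ)) (𝓝[>] 0) (𝓝 (vol a b)) := by
  have h := tendsto_finsetProd (Finset.univ : Finset (Fin d))
    (fun i _ => tendsto_len (a i) (b i))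
  refine h.congr fun ε => ?_
  rw [Finset.prod_mul_distrib, Bx, Fintype.card_piFinset]
  simp

lemma vol_nonneg {d : ℕ} (a b : Fin d → ℝ) : 0 ≤ vol a b :=
  Finset.prod_nonneg fun _ _ => le_max_right _ _

/-- faces of a box -/
def face {d : ℕ} (i : Fin d) (lo hi : Fin d → ℤ) (c : ℤ) : Finset (Zd d) :=
  Fintype.piFinset fun j => if j = i then {c} else Finset.Ico (lo j) (hi j)

lemma sum_cob_le {d : ℕ} (i : Fin d) (lo hi : Fin d → ℤ) (G : Zd d → ℝ) (M : ℝ)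
    (hG : ∀ z, |G z| ≤ M) :
    |∑ z ∈ Fintype.piFinset (fun j => Finset.Ico (lo j) (hi j)), (G z - G (z + stdb i))|
      ≤ 2 * M * ∏ j, (if j = i then 1 else ((Finset.Ico (lo j) (hi j)).card : ℝ)) := by
  set B := Fintype.piFinset (fun j => Finset.Ico (lo j) (hi j)) with hB
  set B' := B.map (addRightEmbedding (stdb i)) with hB'
  have hcard : ∀ c, ((face i lo hi c).card : ℝ)
      = ∏ j, (if j = i then 1 else ((Finset.Ico (lo j) (hi j)).card : ℝ)) := by
    intro c
    rw [face, Fintype.card_piFinset]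
    push_cast
    refine Finset.prod_congr rfl fun j _ => ?_
    split_ifs <;> simp
  have h1 : ∑ z ∈ B, (G z - G (z + stdb i)) = ∑ z ∈ B \ B', G z - ∑ z ∈ B' \ B, G z := by
    rw [Finset.sum_sdiff_sub_sum_sdiff, Finset.sum_sub_distrib, hB', Finset.sum_map]
    rfl
  have hst : ∀ j, j ≠ i → stdb (d := d) i j = 0 := fun j hj => by simp [stdb, hj]
  have hsi : stdb (d := d) i i = 1 := by simp [stdb]
  have s1 : B \ B' ⊆ face i lo hi (lo i) := by
    intro z hz
    rw [Finset.mem_sdiff] at hz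
    obtain ⟨hz1, hz2⟩ := hz
    have hz1' := Fintype.mem_piFinset.1 hz1
    rw [face, Fintype.mem_piFinset]
    intro j
    by_cases hj : j = i
    · subst hj
      rw [if_pos rfl, Finset.mem_singleton]
      by_contra hne
      apply hz2
      rw [hB', Finset.mem_map]
      refine ⟨z - stdb j, ?_, by simp⟩
      rw [hB, Fintype.mem_piFinset]
      intro k
      have hk := hz1' k
      rw [Finset.mem_Ico] at hk ⊢
      by_cases hkj : k = j
      · subst hkj
        rw [Pi.sub_apply, hsi]
        omega
      · rw [Pi.sub_apply, hst k hkj]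
        omega
    · rw [if_neg hj]
      exact hz1' j
  have s2 : B' \ B ⊆ face i lo hi (hi i) := by
    intro z hz
    rw [Finset.mem_sdiff] at hz
    obtain ⟨hz1, hz2⟩ := hz
    rw [hB', Finset.mem_map] at hz1
    obtain ⟨w, hw, rfl⟩ := hz1
    have hw' := Fintype.mem_piFinset.1 hw
    have hadd : ∀ k, (addRightEmbedding (stdb i) w) k = w k + stdb i k := fun k => rfl
    rw [face, Fintype.mem_piFinset]
    intro j
    by_cases hj : j = i
    · subst hj
      rw [if_pos rfl, Finset.mem_singleton]
      by_contra hne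
      apply hz2
      rw [hB, Fintype.mem_piFinset]
      intro k
      have hk := hw' k
      rw [hadd] at hne ⊢
      rw [Finset.mem_Ico] at hk ⊢
      by_cases hkj : k = j
      · subst hkj
        rw [hsi] at hne ⊢
        omega
      · rw [hst k hkj]
        omega
    · rw [if_neg hj, hadd, hst j hj, add_zero]
      exact hw' j
  have hM : 0 ≤ M := (abs_nonneg _).trans (hG 0)
  have key : ∀ (S : Finset (Zd d)) (c : ℤ), S ⊆ face i lo hi c → |∑ z ∈ S, G z| ≤
      M * ∏ j, (if j = i then 1 else ((Finset.Ico (lo j) (hi j)).card : ℝ)) := by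
    intro S c hS
    rw [← hcard c]
    calc |∑ z ∈ S, G z| ≤ ∑ z ∈ S, |G z| := Finset.abs_sum_le_sum_abs _ _
      _ ≤ ∑ z ∈ S, M := Finset.sum_le_sum fun z _ => hG z
      _ = M * S.card := by simp [mul_comm]
      _ ≤ _ := by gcongr
  rw [h1]
  have k1 := key _ _ s1
  have k2 := key _ _ s2
  have := abs_sub (∑ z ∈ B \ B', G z) (∑ z ∈ B' \ B, G z)
  linarith

lemma tendsto_cob {d : ℕ} (i : Fin d) (G : Zd d → ℝ) (M : ℝ)
    (hG : ∀ z, |G z| ≤ M) (a b : Fin d → ℝ) :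
    Tendsto (fun ε : ℝ => ε ^ d * ∑ z ∈ Bx ε a b, (G z - G (z + stdb i))) (𝓝[>] 0) (𝓝 0) := by
  have hid : Tendsto (fun ε : ℝ => ε) (𝓝[>] 0) (𝓝 0) :=
    tendsto_id.mono_left nhdsWithin_le_nhds
  have h : Tendsto (fun ε : ℝ => 2 * M * ∏ j, (if j = i then ε else
      ε * ((Finset.Ico ⌈a j / ε⌉ ⌈b j / ε⌉).card : ℝ))) (𝓝[>] 0) (𝓝 0) := by
    have h0 := (tendsto_finsetProd (Finset.univ : Finset (Fin d)) (f := fun j (ε : ℝ) =>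
      (if j = i then ε else ε * ((Finset.Ico ⌈a j / ε⌉ ⌈b j / ε⌉).card : ℝ)))
      (a := fun j => if j = i then 0 else max (b j - a j) 0) (x := 𝓝[>] 0) (by
        intro j _
        by_cases hj : j = i
        · simpa [hj] using hid
        · simpa [hj] using tendsto_len (a j) (b j))).const_mul (2 * M)
    have : ∏ j, (if j = i then 0 else max (b j - a j) 0) = 0 :=
      Finset.prod_eq_zero (Finset.mem_univ i) (by simp)
    rw [this, mul_zero] at h0
    exact h0
  refine squeeze_zero_norm' ?_ h
  filter_upwards [self_mem_nhdsWithin] with ε (hε : 0 < ε)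
  rw [Real.norm_eq_abs, abs_mul, abs_of_pos (pow_pos hε d)]
  have := sum_cob_le i (fun j => ⌈a j / ε⌉) (fun j => ⌈b j / ε⌉) G M hG
  refine (mul_le_mul_of_nonneg_left this (pow_pos hε d).le).trans (le_of_eq ?_)
  have e : ∏ j, (if j = i then ε else ε * ((Finset.Ico ⌈a j / ε⌉ ⌈b j / ε⌉).card : ℝ))
      = ∏ j, (ε * (if j = i then 1 else ((Finset.Ico ⌈a j / ε⌉ ⌈b j / ε⌉).card : ℝ))) := by
    refine Finset.prod_congr rfl fun j _ => ?_
    split_ifs <;> simp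
  rw [e, Finset.prod_mul_distrib]
  simp
  ring

/-- Discrete balls. -/
def Ball (d N : ℕ) : Finset (Zd d) := Fintype.piFinset fun _ => Finset.Icc (-(N : ℤ)) N

lemma card_Ball (d N : ℕ) : (Ball d N).card = (2 * N + 1) ^ d := by
  rw [Ball, Fintype.card_piFinset]
  simp only [Int.card_Icc, Finset.prod_const, Finset.card_univ, Fintype.card_fin]
  congr 1
  omega

lemma mem_Ball {d N : ℕ} {z : Zd d} : z ∈ Ball d N ↔ ∀ i, |z i| ≤ N := by
  simp [Ball, Fintype.mem_piFinset, abs_le]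

lemma Bx_subset_Ball {d : ℕ} (a b : Fin d → ℝ) : ∃ C : ℝ, 0 ≤ C ∧ ∀ ε : ℝ, 0 < ε → ε ≤ 1 →
    ∃ N : ℕ, Bx ε a b ⊆ Ball d N ∧ ε ^ d * ((2 * N + 1 : ℝ) ^ d) ≤ C := by
  set ρ : ℝ := ∑ i, (|a i| + |b i|) with hρ
  have hρ0 : 0 ≤ ρ := Finset.sum_nonneg fun i _ => by positivity
  have hab : ∀ i, |a i| + |b i| ≤ ρ := fun i =>
    Finset.single_le_sum (f := fun i => |a i| + |b i|) (fun i _ => by positivity)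
      (Finset.mem_univ i)
  refine ⟨(2 * ρ + 3) ^ d, by positivity, fun ε hε hε1 => ⟨⌈ρ / ε⌉₊, ?_, ?_⟩⟩
  · intro z hz
    rw [mem_Bx hε] at hz
    rw [mem_Ball]
    intro i
    have h1 := hz i
    simp only [PiLp.smul_apply, toRd_apply, smul_eq_mul] at h1
    have h2 : |(z i : ℝ)| ≤ ρ / ε := by
      rw [le_div_iff₀ hε, mul_comm, ← abs_of_pos hε, ← abs_mul]
      have h3 := hab i
      have h4 := neg_abs_le (a i)
      have h5 := le_abs_self (b i)
      have h6 := abs_nonneg (b i)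
      have h7 := abs_nonneg (a i)
      rw [abs_le]
      constructor <;> linarith
    have h3 := h2.trans (Nat.le_ceil (ρ / ε))
    exact_mod_cast h3
  · rw [← mul_pow]
    refine pow_le_pow_left₀ (by positivity) ?_ d
    have h3 := (Nat.ceil_lt_add_one (div_nonneg hρ0 hε.le)).le
    have h4 := mul_le_mul_of_nonneg_left h3 hε.le
    have h5 : ε * (ρ / ε + 1) = ρ + ε := by field_simp
    nlinarith

lemma mem_closedBall_iff {d : ℕ} (x z : Zd d) (N : ℕ) :
    z ∈ closedBall x (N : ℝ) ↔ z - x ∈ Ball d N := by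
  rw [mem_closedBall, dist_pi_le_iff (Nat.cast_nonneg N), mem_Ball]
  refine forall_congr' fun i => ?_
  rw [Int.dist_eq, Pi.sub_apply]
  exact_mod_cast Iff.rfl

lemma zero_mem_Ball {d N : ℕ} : (0 : Zd d) ∈ Ball d N := by
  rw [mem_Ball]; intro i; simp

lemma Ball_add {d M N : ℕ} {x y : Zd d} (hx : x ∈ Ball d M) (hy : y ∈ Ball d N) :
    x + y ∈ Ball d (M + N) := by
  rw [mem_Ball] at *
  intro i
  have := abs_add_le (x i) (y i)
  have h1 := hx i
  have h2 := hy i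
  rw [Pi.add_apply]
  push_cast
  linarith

lemma vitali_count {d : ℕ} (g : Zd d → ℝ≥0∞) (t : ℝ≥0∞) (L : ℕ) (S : Finset (Zd d))
    (hSL : S ⊆ Ball d L)
    (hS : ∀ x ∈ S, ∃ N : ℕ, N ≤ L ∧ t * (2 * N + 1) ^ d ≤ ∑ y ∈ Ball d N, g (x + y)) :
    t * S.card ≤ 5 ^ d * ∑ y ∈ Ball d (2 * L), g y := by
  have hS' : ∀ x : Zd d, ∃ N : ℕ, x ∈ S →
      (N ≤ L ∧ t * (2 * N + 1) ^ d ≤ ∑ y ∈ Ball d N, g (x + y)) := by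
    intro x
    by_cases hx : x ∈ S
    · obtain ⟨N, hN⟩ := hS x hx
      exact ⟨N, fun _ => hN⟩
    · exact ⟨0, fun h => absurd h hx⟩
  choose N hN using hS'
  obtain ⟨u, huS, hdisj, hcov⟩ := Vitali.exists_disjoint_subfamily_covering_enlargement_closedBall
    (S : Set (Zd d)) (fun x => x) (fun x => (N x : ℝ)) (L : ℝ)
    (fun x hx => by exact_mod_cast (hN x hx).1) 5 (by norm_num)
  have hufin : u.Finite := S.finite_toSet.subset huS
  set U := hufin.toFinset with hU
  have hUS : ∀ x ∈ U, x ∈ S := fun x hx => huS (hufin.mem_toFinset.1 hx)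
  have hsub : S ⊆ U.biUnion fun x => (Ball d (5 * N x)).map (addLeftEmbedding x) := by
    intro x hx
    obtain ⟨b, hb, hsub⟩ := hcov x hx
    rw [Finset.mem_biUnion]
    refine ⟨b, hufin.mem_toFinset.2 hb, ?_⟩
    have h1 : x ∈ closedBall b ((5 * N b : ℕ) : ℝ) := by
      have := hsub (mem_closedBall_self (Nat.cast_nonneg _))
      push_cast
      exact this
    rw [mem_closedBall_iff] at h1
    rw [Finset.mem_map]
    exact ⟨x - b, h1, by simp⟩
  have hcard : (S.card : ℝ≥0∞) ≤ ∑ x ∈ U, (5 : ℝ≥0∞) ^ d * (2 * N x + 1) ^ d := by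
    have h1 : S.card ≤ ∑ x ∈ U, (5 ^ d * (2 * N x + 1) ^ d) := by
      refine (Finset.card_le_card hsub).trans (Finset.card_biUnion_le.trans ?_)
      refine Finset.sum_le_sum fun x _ => ?_
      rw [Finset.card_map, card_Ball, ← mul_pow]
      exact Nat.pow_le_pow_left (by omega) d
    exact_mod_cast h1
  calc t * S.card ≤ t * ∑ x ∈ U, (5 : ℝ≥0∞) ^ d * (2 * N x + 1) ^ d := by gcongr
    _ = 5 ^ d * ∑ x ∈ U, t * (2 * N x + 1) ^ d := by
        rw [Finset.mul_sum, Finset.mul_sum]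
        exact Finset.sum_congr rfl fun x _ => by ring
    _ ≤ 5 ^ d * ∑ x ∈ U, ∑ y ∈ Ball d (N x), g (x + y) := by
        gcongr with x hx
        exact (hN x (hUS x hx)).2
    _ = 5 ^ d * ∑ x ∈ U, ∑ y ∈ (Ball d (N x)).map (addLeftEmbedding x), g y := by
        simp only [Finset.sum_map]; rfl
    _ = 5 ^ d * ∑ y ∈ U.biUnion fun x => (Ball d (N x)).map (addLeftEmbedding x), g y := by
        rw [Finset.sum_biUnion]
        intro x hx x' hx' hne
        have hd := hdisj (hufin.mem_toFinset.1 hx) (hufin.mem_toFinset.1 hx') hne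
        rw [Function.onFun, Finset.disjoint_left]
        intro z hz hz'
        rw [Finset.mem_map] at hz hz'
        obtain ⟨w, hw, rfl⟩ := hz
        obtain ⟨w', hw', he⟩ := hz'
        refine Set.disjoint_left.1 hd (show x + w ∈ _ from ?_) ?_
        · exact (mem_closedBall_iff _ _ _).2 (by simpa using hw)
        · refine (mem_closedBall_iff _ _ _).2 ?_
          have : x + w - x' = w' := by
            have he' : x' + w' = x + w := he
            rw [← he']; simp
          rw [this]; exact hw'
    _ ≤ 5 ^ d * ∑ y ∈ Ball d (2 * L), g y := by
        gcongr
        intro z hz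
        rw [Finset.mem_biUnion] at hz
        obtain ⟨x, hx, hz⟩ := hz
        rw [Finset.mem_map] at hz
        obtain ⟨w, hw, rfl⟩ := hz
        have h1 := hSL (hUS x hx)
        have h2 := (hN x (hUS x hx)).1
        have h3 : (addLeftEmbedding x) w ∈ Ball d (L + N x) := Ball_add h1 hw
        rw [mem_Ball] at h3 ⊢
        intro i
        refine (h3 i).trans ?_
        push_cast
        omega

section erg

variable {d : ℕ} {Ω : Type*} [MeasurableSpace Ω]

/-- Truncated maximal set. -/
def MxL (τ : Zd d → Ω → Ω) (h : Ω → ℝ≥0∞) (t : ℝ≥0∞) (L : ℕ) : Set Ω :=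
  {ω | ∃ N : ℕ, N ≤ L ∧ t * (2 * N + 1) ^ d ≤ ∑ y ∈ Ball d N, h (τ y ω)}

/-- Maximal set. -/
def Mx (τ : Zd d → Ω → Ω) (h : Ω → ℝ≥0∞) (t : ℝ≥0∞) : Set Ω :=
  {ω | ∃ N : ℕ, t * (2 * N + 1) ^ d ≤ ∑ y ∈ Ball d N, h (τ y ω)}

lemma measurableSet_MxL (τ : Zd d → Ω → Ω) (hτ : ∀ z, Measurable (τ z)) (h : Ω → ℝ≥0∞)
    (hh : Measurable h) (t : ℝ≥0∞) (L : ℕ) : MeasurableSet (MxL τ h t L) := by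
  have : MxL τ h t L = ⋃ N : ℕ, ⋃ _ : N ≤ L,
      {ω | t * (2 * N + 1) ^ d ≤ ∑ y ∈ Ball d N, h (τ y ω)} := by
    ext ω; simp [MxL]
  rw [this]
  refine MeasurableSet.iUnion fun N => MeasurableSet.iUnion fun _ => ?_
  refine measurableSet_le measurable_const ?_
  exact Finset.measurable_fun_sum _ fun y _ => hh.comp (hτ y)

lemma maximal_L (P : Measure Ω)
    (τ : Zd d → Ω → Ω) (hτadd : ∀ x y : Zd d, τ (x + y) = τ x ∘ τ y)
    (hτmp : ∀ z : Zd d, MeasurePreserving (τ z) P P) (h : Ω → ℝ≥0∞)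
    (hh : Measurable h) (t : ℝ≥0∞) (L : ℕ) :
    t * P (MxL τ h t L) ≤ 10 ^ d * ∫⁻ ω, h ω ∂P := by
  have hm := measurableSet_MxL τ (fun z => (hτmp z).measurable) h hh t L
  have hpt : ∀ ω, ∑ x ∈ Ball d L, t * (MxL τ h t L).indicator (fun _ => (1 : ℝ≥0∞)) (τ x ω)
      ≤ 5 ^ d * ∑ y ∈ Ball d (2 * L), h (τ y ω) := by
    intro ω
    have := vitali_count (fun z => h (τ z ω)) t L ((Ball d L).filter fun x => τ x ω ∈ MxL τ h t L)
      (Finset.filter_subset _ _) (by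
        intro x hx
        obtain ⟨N, hN, h2⟩ := (Finset.mem_filter.1 hx).2
        refine ⟨N, hN, h2.trans (le_of_eq (Finset.sum_congr rfl fun y _ => ?_))⟩
        rw [add_comm x y, hτadd]; rfl)
    refine le_trans (le_of_eq ?_) this
    rw [← Finset.mul_sum]
    congr 1
    rw [Finset.card_filter]
    push_cast
    refine Finset.sum_congr rfl fun x _ => ?_
    simp [Set.indicator_apply]
  have hIntg := lintegral_mono (μ := P) hpt
  have hl : ∫⁻ ω, ∑ x ∈ Ball d L, t * (MxL τ h t L).indicator (fun _ => (1 : ℝ≥0∞)) (τ x ω) ∂P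
      = (2 * L + 1) ^ d * (t * P (MxL τ h t L)) := by
    have hmi : Measurable ((MxL τ h t L).indicator (fun _ => (1 : ℝ≥0∞))) :=
      measurable_const.indicator hm
    rw [lintegral_finsetSum]
    · have : ∀ x ∈ Ball d L, ∫⁻ ω, t * (MxL τ h t L).indicator (fun _ => (1 : ℝ≥0∞)) (τ x ω) ∂P
          = t * P (MxL τ h t L) := by
        intro x _
        have hc : Measurable fun ω => (MxL τ h t L).indicator (fun _ => (1 : ℝ≥0∞)) (τ x ω) :=
          hmi.comp (hτmp x).measurable
        rw [lintegral_const_mul _ hc, (hτmp x).lintegral_comp hmi,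
          lintegral_indicator_const hm, one_mul]
      rw [Finset.sum_congr rfl this, Finset.sum_const, card_Ball, nsmul_eq_mul]
      push_cast
      rfl
    · intro x _
      exact (hmi.comp (hτmp x).measurable).const_mul t
  have hr : ∫⁻ ω, 5 ^ d * ∑ y ∈ Ball d (2 * L), h (τ y ω) ∂P
      = 5 ^ d * ((2 * (2 * L) + 1) ^ d * ∫⁻ ω, h ω ∂P) := by
    have hc : ∀ y, Measurable fun ω => h (τ y ω) := fun y => hh.comp (hτmp y).measurable
    rw [lintegral_const_mul _ (Finset.measurable_fun_sum _ fun y _ => hc y),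
      lintegral_finsetSum _ (fun y _ => hc y)]
    have : ∀ y ∈ Ball d (2 * L), ∫⁻ ω, h (τ y ω) ∂P = ∫⁻ ω, h ω ∂P :=
      fun y _ => (hτmp y).lintegral_comp hh
    rw [Finset.sum_congr rfl this, Finset.sum_const, card_Ball, nsmul_eq_mul]
    push_cast
    rfl
  rw [hl, hr] at hIntg
  have hle : (5 : ℝ≥0∞) ^ d * ((2 * (2 * L) + 1) ^ d * ∫⁻ ω, h ω ∂P)
      ≤ (2 * L + 1) ^ d * (10 ^ d * ∫⁻ ω, h ω ∂P) := by
    rw [← mul_assoc (5 ^ d), ← mul_assoc ((2 * (L : ℝ≥0∞) + 1) ^ d), ← mul_pow, ← mul_pow]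
    refine mul_le_mul' (pow_le_pow_left' ?_ d) le_rfl
    have : 5 * (2 * (2 * L) + 1) ≤ (2 * L + 1) * 10 := by omega
    exact_mod_cast this
  have h3 := hIntg.trans hle
  refine (ENNReal.mul_le_mul_iff_right ?_ ?_).1 h3
  · positivity
  · finiteness

lemma maximal (P : Measure Ω)
    (τ : Zd d → Ω → Ω) (hτadd : ∀ x y : Zd d, τ (x + y) = τ x ∘ τ y)
    (hτmp : ∀ z : Zd d, MeasurePreserving (τ z) P P) (h : Ω → ℝ≥0∞)
    (hh : Measurable h) (t : ℝ≥0∞) :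
    t * P (Mx τ h t) ≤ 10 ^ d * ∫⁻ ω, h ω ∂P := by
  have hU : Mx τ h t = ⋃ L, MxL τ h t L := by
    ext ω
    simp only [Mx, MxL, Set.mem_ofPred_eq, Set.mem_iUnion]
    exact ⟨fun ⟨N, hN⟩ => ⟨N, N, le_rfl, hN⟩, fun ⟨_, N, _, hN⟩ => ⟨N, hN⟩⟩
  have hmono : Monotone (MxL τ h t) := by
    intro L L' hL ω hω
    obtain ⟨N, hN, h2⟩ := hω
    exact ⟨N, hN.trans hL, h2⟩
  rw [hU, hmono.measure_iUnion, ENNReal.mul_iSup]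
  exact iSup_le fun L => maximal_L P τ hτadd hτmp h hh t L

end erg

section erg2

variable {d : ℕ} {Ω : Type*} [MeasurableSpace Ω]

/-- The pointwise ergodic theorem holds for `f`. -/
def Good (P : Measure Ω) (τ : Zd d → Ω → Ω) (f : Ω → ℝ) : Prop :=
  ∀ᵐ ω ∂P, ∀ a b : Fin d → ℝ,
    Tendsto (fun ε : ℝ => ε ^ d * ∑ z ∈ Bx ε a b, f (τ z ω)) (𝓝[>] 0) (𝓝 (vol a b * ∫ ω, f ω ∂P))

lemma Good.congr {P : Measure Ω} {τ : Zd d → Ω → Ω}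
    (hτmp : ∀ z : Zd d, MeasurePreserving (τ z) P P) {f g : Ω → ℝ} (hf : Good P τ f)
    (h : f =ᵐ[P] g) : Good P τ g := by
  have h1 : ∀ᵐ ω ∂P, ∀ z, f (τ z ω) = g (τ z ω) :=
    ae_all_iff.2 fun z => (hτmp z).quasiMeasurePreserving.ae h
  filter_upwards [hf, h1] with ω hω h1 a b
  rw [← integral_congr_ae h]
  simpa only [h1] using hω a b

lemma Good.add {P : Measure Ω} {τ : Zd d → Ω → Ω} {f g : Ω → ℝ} (hf : Good P τ f)
    (hg : Good P τ g) (hfi : Integrable f P) (hgi : Integrable g P) : Good P τ (f + g) := by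
  filter_upwards [hf, hg] with ω h1 h2 a b
  have := (h1 a b).add (h2 a b)
  rw [← mul_add, ← integral_add hfi hgi] at this
  refine this.congr fun ε => ?_
  rw [← mul_add, ← Finset.sum_add_distrib]
  rfl

lemma Good.smul {P : Measure Ω} {τ : Zd d → Ω → Ω} {f : Ω → ℝ} (hf : Good P τ f)
    (c : ℝ) : Good P τ (c • f) := by
  filter_upwards [hf] with ω h1 a b
  have := (h1 a b).const_mul c
  have e : c * (vol a b * ∫ ω, f ω ∂P) = vol a b * ∫ ω, (c • f) ω ∂P := by
    simp only [Pi.smul_apply, smul_eq_mul]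
    rw [integral_const_mul]; ring
  rw [e] at this
  refine this.congr fun ε => ?_
  simp only [Pi.smul_apply, smul_eq_mul]
  rw [← Finset.mul_sum]; ring

lemma Good.const (P : Measure Ω) [IsProbabilityMeasure P] (τ : Zd d → Ω → Ω) (c : ℝ) :
    Good P τ (fun _ => c) := by
  refine ae_of_all _ fun ω a b => ?_
  have := (tendsto_card_Bx a b).mul_const c
  simp only [integral_const, probReal_univ, one_smul]
  refine this.congr fun ε => ?_
  rw [Finset.sum_const, nsmul_eq_mul]; ring

lemma Good.cob_bdd {P : Measure Ω} {τ : Zd d → Ω → Ω}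
    (hτadd : ∀ x y : Zd d, τ (x + y) = τ x ∘ τ y)
    (hτmp : ∀ z : Zd d, MeasurePreserving (τ z) P P) (i : Fin d) {g : Ω → ℝ}
    (hgm : Measurable g) (hgi : Integrable g P) (M : ℝ) (hM : ∀ ω, |g ω| ≤ M) :
    Good P τ (g - g ∘ τ (stdb i)) := by
  refine ae_of_all _ fun ω a b => ?_
  have h0 : ∫ ω, (g - g ∘ τ (stdb i)) ω ∂P = 0 := by
    have h1 : ∫ ω, g (τ (stdb i) ω) ∂P = ∫ ω, g ω ∂P := by
      rw [← integral_map (hτmp (stdb i)).aemeasurable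
        (by rw [(hτmp (stdb i)).map_eq]; exact hgm.aestronglyMeasurable), (hτmp (stdb i)).map_eq]
    simp only [Pi.sub_apply, Function.comp_apply]
    have h2 : Integrable (fun ω => g (τ (stdb i) ω)) P :=
      (hτmp (stdb i)).integrable_comp_of_integrable hgi
    rw [integral_sub hgi h2, h1, sub_self]
  rw [h0, mul_zero]
  refine (tendsto_cob i (fun z => g (τ z ω)) M (fun z => hM _) a b).congr fun ε => ?_
  congr 1
  refine Finset.sum_congr rfl fun z _ => ?_
  simp only [Pi.sub_apply, Function.comp_apply]
  rw [add_comm z, hτadd]; rfl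

lemma Good.closed {P : Measure Ω} {τ : Zd d → Ω → Ω}
    (hτadd : ∀ x y : Zd d, τ (x + y) = τ x ∘ τ y)
    (hτmp : ∀ z : Zd d, MeasurePreserving (τ z) P P) {f : Ω → ℝ}
    (hfm : Measurable f) (hfi : Integrable f P)
    (H : ∀ δ : ℝ, 0 < δ → ∃ g : Ω → ℝ, Measurable g ∧ Integrable g P ∧ Good P τ g ∧
      ∫⁻ ω, ‖f ω - g ω‖ₑ ∂P ≤ ENNReal.ofReal δ) : Good P τ f := by
  have H' : ∀ n : ℕ, ∃ g : Ω → ℝ, Measurable g ∧ Integrable g P ∧ Good P τ g ∧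
      ∫⁻ ω, ‖f ω - g ω‖ₑ ∂P ≤ ENNReal.ofReal ((1 / 4) ^ n) := fun n => H _ (by positivity)
  choose g hgm hgi hg hd using H'
  set t : ℕ → ℝ≥0∞ := fun n => ENNReal.ofReal ((1 / 2) ^ n) with ht
  have hP : ∀ n, P (Mx τ (fun ω => ‖f ω - g n ω‖ₑ) (t n)) ≤ 10 ^ d * t n := by
    intro n
    have h1 := maximal P τ hτadd hτmp (fun ω => ‖f ω - g n ω‖ₑ)
      ((hfm.sub (hgm n)).enorm) (t n)
    have h2 : t n * P (Mx τ (fun ω => ‖f ω - g n ω‖ₑ) (t n)) ≤ t n * (10 ^ d * t n) := by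
      refine h1.trans ?_
      calc _ ≤ 10 ^ d * ENNReal.ofReal ((1 / 4) ^ n) := by gcongr; exact hd n
        _ = 10 ^ d * (t n * t n) := by
          rw [ht, ← ENNReal.ofReal_mul (by positivity), ← mul_pow]; norm_num
        _ = _ := by ring
    refine (ENNReal.mul_le_mul_iff_right ?_ ?_).1 h2
    · rw [ht]; simp
    · rw [ht]; finiteness
  have hsum : ∑' n, P (Mx τ (fun ω => ‖f ω - g n ω‖ₑ) (t n)) ≠ ⊤ := by
    refine ne_top_of_le_ne_top ?_ (ENNReal.tsum_le_tsum hP)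
    rw [ENNReal.tsum_mul_left]
    refine ENNReal.mul_ne_top (by finiteness) ?_
    have hs : Summable fun n : ℕ => ((1 : ℝ) / 2) ^ n := summable_geometric_two
    rw [ht, ← ENNReal.ofReal_tsum_of_nonneg (fun n => by positivity) hs]
    finiteness
  have hbc := ae_eventually_notMem hsum
  have hall : ∀ᵐ ω ∂P, ∀ n, ∀ a b : Fin d → ℝ,
      Tendsto (fun ε : ℝ => ε ^ d * ∑ z ∈ Bx ε a b, g n (τ z ω)) (𝓝[>] 0)
        (𝓝 (vol a b * ∫ ω, g n ω ∂P)) := ae_all_iff.2 hg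
  have hInt : ∀ n, |∫ ω, f ω ∂P - ∫ ω, g n ω ∂P| ≤ (1 / 4) ^ n := by
    intro n
    rw [← integral_sub hfi (hgi n), ← Real.norm_eq_abs]
    have h1 : ‖∫ ω, (f ω - g n ω) ∂P‖ₑ ≤ ENNReal.ofReal ((1 / 4) ^ n) :=
      (enorm_integral_le_lintegral_enorm _).trans (hd n)
    rw [← ofReal_norm] at h1
    exact (ENNReal.ofReal_le_ofReal_iff (by positivity)).1 h1
  filter_upwards [hbc, hall] with ω hω hω2 a b
  obtain ⟨C, hC0, hC⟩ := Bx_subset_Ball a b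
  rw [Metric.tendsto_nhds]
  intro δ hδ
  have hlim : Tendsto (fun n : ℕ => C * (1 / 2 : ℝ) ^ n + vol a b * (1 / 4 : ℝ) ^ n) atTop
      (𝓝 (C * 0 + vol a b * 0)) :=
    ((tendsto_pow_atTop_nhds_zero_of_lt_one (by norm_num) (by norm_num)).const_mul C).add
      ((tendsto_pow_atTop_nhds_zero_of_lt_one (by norm_num) (by norm_num)).const_mul _)
  rw [mul_zero, mul_zero, add_zero] at hlim
  obtain ⟨n, hn1, hn2⟩ := (hω.and (hlim.eventually (gt_mem_nhds (half_pos hδ)))).exists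
  have h3 := (Metric.tendsto_nhds.1 (hω2 n a b)) (δ / 2) (half_pos hδ)
  have h1 : ∀ᶠ ε : ℝ in 𝓝[>] 0, ε ≤ 1 :=
    (eventually_le_nhds (by norm_num : (0 : ℝ) < 1)).filter_mono nhdsWithin_le_nhds
  filter_upwards [h3, h1, self_mem_nhdsWithin] with ε h3 hε1 (hε : 0 < ε)
  obtain ⟨N, hN, hNC⟩ := hC ε hε hε1
  have hmax : ∑ y ∈ Ball d N, ‖f (τ y ω) - g n (τ y ω)‖ₑ ≤ t n * (2 * N + 1) ^ d := by
    by_contra hcon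
    exact hn1 ⟨N, (not_le.1 hcon).le⟩
  have hmax' : ∑ y ∈ Ball d N, |f (τ y ω) - g n (τ y ω)| ≤ (1 / 2) ^ n * (2 * N + 1) ^ d := by
    have e1 : ∑ y ∈ Ball d N, ‖f (τ y ω) - g n (τ y ω)‖ₑ
        = ENNReal.ofReal (∑ y ∈ Ball d N, |f (τ y ω) - g n (τ y ω)|) := by
      rw [ENNReal.ofReal_sum_of_nonneg fun _ _ => abs_nonneg _]
      refine Finset.sum_congr rfl fun y _ => ?_
      rw [← Real.norm_eq_abs, ofReal_norm]
    have e2 : t n * (2 * N + 1) ^ d = ENNReal.ofReal ((1 / 2) ^ n * (2 * N + 1) ^ d) := by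
      rw [ENNReal.ofReal_mul (by positivity), ENNReal.ofReal_pow (p := (2 * N + 1 : ℝ)) (by positivity)]
      congr 2
      exact_mod_cast (ENNReal.ofReal_natCast (2 * N + 1)).symm
    rw [e1, e2] at hmax
    exact (ENNReal.ofReal_le_ofReal_iff (by positivity)).1 hmax
  have hdiff : |ε ^ d * ∑ z ∈ Bx ε a b, f (τ z ω) - ε ^ d * ∑ z ∈ Bx ε a b, g n (τ z ω)|
      ≤ C * (1 / 2) ^ n := by
    rw [← mul_sub, ← Finset.sum_sub_distrib, abs_mul, abs_of_pos (pow_pos hε d)]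
    calc _ ≤ ε ^ d * ∑ z ∈ Bx ε a b, |f (τ z ω) - g n (τ z ω)| := by
          gcongr; exact Finset.abs_sum_le_sum_abs _ _
      _ ≤ ε ^ d * ∑ z ∈ Ball d N, |f (τ z ω) - g n (τ z ω)| := by
          gcongr
      _ ≤ ε ^ d * ((1 / 2) ^ n * (2 * N + 1) ^ d) := by gcongr
      _ = (ε ^ d * (2 * N + 1) ^ d) * (1 / 2) ^ n := by ring
      _ ≤ _ := by gcongr
  have hv : |vol a b * ∫ ω, f ω ∂P - vol a b * ∫ ω, g n ω ∂P| ≤ vol a b * (1 / 4) ^ n := by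
    rw [← mul_sub, abs_mul, abs_of_nonneg (vol_nonneg a b)]
    exact mul_le_mul_of_nonneg_left (hInt n) (vol_nonneg a b)
  rw [Real.dist_eq] at h3 ⊢
  rw [abs_lt] at h3 ⊢
  rw [abs_le] at hdiff hv
  constructor <;> linarith [h3.1, h3.2, hdiff.1, hdiff.2, hv.1, hv.2]

lemma L1_approx {P : Measure Ω} (s : Set (Ω →₁[P] ℝ)) (f : Ω →₁[P] ℝ) (hf : f ∈ closure s)
    (δ : ℝ) (hδ : 0 < δ) : ∃ g ∈ s, ∫⁻ ω, ‖f ω - g ω‖ₑ ∂P ≤ ENNReal.ofReal δ := by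
  obtain ⟨g, hg, hfg⟩ := Metric.mem_closure_iff.1 hf δ hδ
  refine ⟨g, hg, ?_⟩
  have h1 := L1.dist_def f g
  have h2 : ∫⁻ ω, ‖f ω - g ω‖ₑ ∂P = edist f g := by
    rw [Lp.edist_def, eLpNorm_one_eq_lintegral_enorm]; rfl
  rw [h2, edist_dist]
  exact ENNReal.ofReal_le_ofReal hfg.le

lemma Good.cob {P : Measure Ω} [IsProbabilityMeasure P] {τ : Zd d → Ω → Ω}
    (hτadd : ∀ x y : Zd d, τ (x + y) = τ x ∘ τ y)
    (hτmp : ∀ z : Zd d, MeasurePreserving (τ z) P P) (i : Fin d) {g : Ω → ℝ}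
    (hgi : Integrable g P) :
    Good P τ (g - g ∘ τ (stdb i)) := by
  have hmp := hτmp (stdb i)
  have hci : ∀ {g : Ω → ℝ}, Integrable g P → Integrable (g - g ∘ τ (stdb i)) P := fun h =>
    h.sub (hmp.integrable_comp_of_integrable h)
  refine Integrable.induction (fun g => Good P τ (g - g ∘ τ (stdb i))) ?_ ?_ ?_ ?_ hgi
  · intro c s hs _
    refine Good.cob_bdd hτadd hτmp i (measurable_const.indicator hs)
      ((integrable_const c).indicator hs) |c| fun ω => ?_
    by_cases h : ω ∈ s <;> simp [h]
  · intro f g _ hf hg h1 h2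
    have := h1.add h2 (hci hf) (hci hg)
    convert this using 1
    ext ω
    simp only [Pi.sub_apply, Pi.add_apply, Function.comp_apply]
    ring
  · rw [← closure_subset_iff_isClosed]
    intro f hf
    have hfm := (Lp.stronglyMeasurable f).measurable
    refine Good.closed hτadd hτmp (hfm.sub (hfm.comp hmp.measurable))
      (hci (L1.integrable_coeFn f)) fun δ hδ => ?_
    obtain ⟨g, hg, hfg⟩ := L1_approx _ f hf (δ / 2) (half_pos hδ)
    have hgm := (Lp.stronglyMeasurable g).measurable
    refine ⟨_, hgm.sub (hgm.comp hmp.measurable), hci (L1.integrable_coeFn g), hg, ?_⟩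
    have hsm : Measurable fun ω => ‖f ω - g ω‖ₑ := (hfm.sub hgm).enorm
    calc _ ≤ ∫⁻ ω, (‖f ω - g ω‖ₑ + ‖f (τ (stdb i) ω) - g (τ (stdb i) ω)‖ₑ) ∂P := by
          refine lintegral_mono fun ω => ?_
          simp only [Pi.sub_apply, Function.comp_apply]
          have : f ω - f (τ (stdb i) ω) - (g ω - g (τ (stdb i) ω))
            = (f ω - g ω) - (f (τ (stdb i) ω) - g (τ (stdb i) ω)) := by ring
          rw [this]
          exact enorm_sub_le
      _ = ∫⁻ ω, ‖f ω - g ω‖ₑ ∂P + ∫⁻ ω, ‖f ω - g ω‖ₑ ∂P := by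
          rw [lintegral_add_left hsm, hmp.lintegral_comp hsm]
      _ ≤ ENNReal.ofReal (δ / 2) + ENNReal.ofReal (δ / 2) := by gcongr
      _ = ENNReal.ofReal δ := by
          rw [← ENNReal.ofReal_add (by positivity) (by positivity), add_halves]
  · intro f g hfg _ hf
    refine hf.congr hτmp ?_
    have := hmp.quasiMeasurePreserving.ae hfg
    filter_upwards [hfg, this] with ω h1 h2
    simp only [Pi.sub_apply, Function.comp_apply, h1, h2]

end erg2

section erg3

variable {d : ℕ} {Ω : Type*} [MeasurableSpace Ω]

lemma ae_const_of_inv {P : Measure Ω} [IsProbabilityMeasure P] {τ : Zd d → Ω → Ω}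
    (hτ0 : τ 0 = id) (hτadd : ∀ x y : Zd d, τ (x + y) = τ x ∘ τ y)
    (hτmp : ∀ z : Zd d, MeasurePreserving (τ z) P P)
    (hτerg : ∀ B : Set Ω, MeasurableSet B → (∀ z : Zd d, τ z ⁻¹' B = B) → P B = 0 ∨ P B = 1)
    {v : Ω → ℝ} (hv : Measurable v) (hinv : ∀ i, v ∘ τ (stdb i) =ᵐ[P] v) :
    ∃ c : ℝ, v =ᵐ[P] fun _ => c := by
  let H : AddSubgroup (Zd d) :=
    { carrier := {z | v ∘ τ z =ᵐ[P] v}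
      add_mem' := by
        intro x y hx hy
        have h1 := (hτmp y).quasiMeasurePreserving.ae hx
        have hy' : v ∘ τ y =ᵐ[P] v := hy
        show v ∘ τ (x + y) =ᵐ[P] v
        rw [hτadd]
        filter_upwards [h1, hy'] with ω a1 a2
        rw [← a2]
        exact a1
      zero_mem' := by
        show v ∘ τ 0 =ᵐ[P] v
        rw [hτ0]; rfl
      neg_mem' := by
        intro x hx
        have h1 := (hτmp (-x)).quasiMeasurePreserving.ae hx
        show v ∘ τ (-x) =ᵐ[P] v
        filter_upwards [h1] with ω a1
        have e : τ x (τ (-x) ω) = ω := by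
          have := hτadd x (-x)
          rw [add_neg_cancel, hτ0] at this
          exact (congrFun this ω).symm
        simp only [Function.comp_apply] at a1 ⊢
        rw [← a1, e] }
  have hall : ∀ z : Zd d, v ∘ τ z =ᵐ[P] v := by
    intro z
    have hz : z = ∑ i, z i • stdb i := by
      ext j
      simp [Finset.sum_apply, stdb]
    have : z ∈ H := by
      rw [hz]
      exact AddSubgroup.sum_mem _ fun i _ => AddSubgroup.zsmul_mem _ (hinv i) _
    exact this
  refine exists_eventuallyEq_const_of_forall_separating MeasurableSet fun U hU => ?_
  set B : Set Ω := {ω | ∀ z, v (τ z ω) ∈ U} with hB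
  have hBm : MeasurableSet B := by
    have : B = ⋂ z, (v ∘ τ z) ⁻¹' U := by ext ω; simp [hB]
    rw [this]
    exact MeasurableSet.iInter fun z => (hv.comp (hτmp z).measurable) hU
  have hBi : ∀ z, τ z ⁻¹' B = B := by
    intro z
    ext ω
    simp only [hB, Set.mem_preimage, Set.mem_ofPred_eq]
    constructor
    · intro h w
      have := h (w - z)
      rwa [← Function.comp_apply (f := τ (w - z)), ← hτadd, sub_add_cancel] at this
    · intro h w
      rw [← Function.comp_apply (f := τ w), ← hτadd]
      exact h _
  have hae : ∀ᵐ ω ∂P, (ω ∈ B ↔ v ω ∈ U) := by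
    have := ae_all_iff.2 hall
    filter_upwards [this] with ω h
    constructor
    · intro hω
      have := hω 0
      rwa [hτ0] at this
    · intro hω z
      have := h z
      simp only [Function.comp_apply] at this
      rwa [this]
  rcases hτerg B hBm hBi with h | h
  · right
    have : ∀ᵐ ω ∂P, ω ∉ B := measure_eq_zero_iff_ae_notMem.1 h
    filter_upwards [this, hae] with ω h1 h2
    rwa [h2] at h1
  · left
    have : ∀ᵐ ω ∂P, ω ∈ B := by
      have := (prob_compl_eq_zero_iff hBm).2 h
      have := measure_eq_zero_iff_ae_notMem.1 this
      filter_upwards [this] with ω h1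
      simpa using h1
    filter_upwards [this, hae] with ω h1 h2
    rwa [h2] at h1

lemma Good.L2 {P : Measure Ω} [IsProbabilityMeasure P] {τ : Zd d → Ω → Ω}
    (hτ0 : τ 0 = id) (hτadd : ∀ x y : Zd d, τ (x + y) = τ x ∘ τ y)
    (hτmp : ∀ z : Zd d, MeasurePreserving (τ z) P P)
    (hτerg : ∀ B : Set Ω, MeasurableSet B → (∀ z : Zd d, τ z ⁻¹' B = B) → P B = 0 ∨ P B = 1)
    (f : Lp ℝ 2 P) : Good P τ f := by
  have hIntg : ∀ f : Lp ℝ 2 P, Integrable f P := fun f => (Lp.memLp f).integrable (by norm_num)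
  let U : Fin d → Lp ℝ 2 P →ₗᵢ[ℝ] Lp ℝ 2 P := fun i =>
    Lp.compMeasurePreservingₗᵢ ℝ (τ (stdb i)) (hτmp (stdb i))
  have hU : ∀ i g, (U i g : Ω → ℝ) =ᵐ[P] g ∘ τ (stdb i) := fun i g =>
    Lp.coeFn_compMeasurePreserving g (hτmp (stdb i))
  let one : Lp ℝ 2 P := Lp.const 2 P (1 : ℝ)
  have hone : (one : Ω → ℝ) =ᵐ[P] fun _ => (1 : ℝ) := Lp.coeFn_const 2 P (1 : ℝ)
  let S : Set (Lp ℝ 2 P) := {one} ∪ {w | ∃ i g, w = g - U i g}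
  let W : Submodule ℝ (Lp ℝ 2 P) := Submodule.span ℝ S
  have hWtop : W.topologicalClosure = ⊤ := by
    rw [Submodule.topologicalClosure_eq_top_iff, Submodule.eq_bot_iff]
    intro v hv
    rw [Submodule.mem_orthogonal] at hv
    have hvU : ∀ i, U i v = v := by
      intro i
      have h1 := hv (v - U i v) (Submodule.subset_span (Or.inr ⟨i, v, rfl⟩))
      have h2 : ‖v - U i v‖ ^ 2 = 0 := by
        rw [norm_sub_sq_real, (U i).norm_map]
        rw [inner_sub_left, real_inner_self_eq_norm_sq, real_inner_comm] at h1
        linarith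
      have h3 : v - U i v = 0 := by
        rw [← norm_eq_zero]
        exact pow_eq_zero_iff (two_ne_zero) |>.1 h2
      exact (sub_eq_zero.1 h3).symm
    obtain ⟨c, hc⟩ := ae_const_of_inv hτ0 hτadd hτmp hτerg (Lp.stronglyMeasurable v).measurable
      (fun i => by
        have := hU i v
        rw [hvU i] at this
        exact this.symm)
    have h1 := hv one (Submodule.subset_span (Or.inl rfl))
    rw [L2.inner_def] at h1
    have h2 : ∫ ω, inner ℝ (one ω) (v ω) ∂P = c := by
      have : (fun ω => inner ℝ (one ω) (v ω)) =ᵐ[P] fun _ => c := by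
        filter_upwards [hone, hc] with ω a1 a2
        rw [a1, a2]; simp
      rw [integral_congr_ae this]; simp
    rw [h2] at h1
    apply Lp.ext
    refine hc.trans ?_
    rw [h1]
    exact (Lp.coeFn_zero _ _ _).symm
  have hWG : ∀ w ∈ W, Good P τ w := by
    intro w hw
    induction hw using Submodule.span_induction with
    | mem x hx =>
      rcases hx with hx | ⟨i, g, rfl⟩
      · rw [Set.mem_singleton_iff] at hx
        rw [hx]
        exact (Good.const P τ 1).congr hτmp hone.symm
      · refine (Good.cob hτadd hτmp i (hIntg g)).congr hτmp ?_
        filter_upwards [Lp.coeFn_sub g (U i g), hU i g] with ω a1 a2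
        rw [a1, Pi.sub_apply, Pi.sub_apply, a2]
    | zero =>
      exact (Good.const P τ 0).congr hτmp (Lp.coeFn_zero _ _ _).symm
    | add x y _ _ hx hy =>
      exact (hx.add hy (hIntg x) (hIntg y)).congr hτmp (Lp.coeFn_add x y).symm
    | smul c x _ hx =>
      exact (hx.smul c).congr hτmp (Lp.coeFn_smul c x).symm
  refine Good.closed hτadd hτmp (Lp.stronglyMeasurable f).measurable (hIntg f) fun δ hδ => ?_
  have hf : f ∈ closure (W : Set (Lp ℝ 2 P)) := by
    have : f ∈ W.topologicalClosure := by rw [hWtop]; trivial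
    exact this
  obtain ⟨g, hg, hfg⟩ := Metric.mem_closure_iff.1 hf δ hδ
  refine ⟨g, (Lp.stronglyMeasurable g).measurable, hIntg g, hWG g hg, ?_⟩
  have h1 : ∫⁻ ω, ‖f ω - g ω‖ₑ ∂P = eLpNorm (⇑f - ⇑g) 1 P := by
    rw [eLpNorm_one_eq_lintegral_enorm]; rfl
  rw [h1]
  calc eLpNorm (⇑f - ⇑g) 1 P ≤ eLpNorm (⇑f - ⇑g) 2 P :=
        eLpNorm_le_eLpNorm_of_exponent_le (by norm_num)
          ((Lp.aestronglyMeasurable f).sub (Lp.aestronglyMeasurable g))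
    _ = edist f g := by rw [Lp.edist_def]
    _ ≤ _ := by rw [edist_dist]; exact ENNReal.ofReal_le_ofReal hfg.le

/-- Pointwise ergodic theorem for `ℤ^d`-actions, over boxes. -/
theorem ergodic_thm {P : Measure Ω} [IsProbabilityMeasure P] {τ : Zd d → Ω → Ω}
    (hτ0 : τ 0 = id) (hτadd : ∀ x y : Zd d, τ (x + y) = τ x ∘ τ y)
    (hτmp : ∀ z : Zd d, MeasurePreserving (τ z) P P)
    (hτerg : ∀ B : Set Ω, MeasurableSet B → (∀ z : Zd d, τ z ⁻¹' B = B) → P B = 0 ∨ P B = 1)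
    {f : Ω → ℝ} (hf : Integrable f P) : Good P τ f := by
  refine Integrable.induction (fun g => Good P τ g) ?_ ?_ ?_ ?_ hf
  · intro c s hs hs'
    have hm : MemLp (s.indicator fun _ => c) 2 P := memLp_indicator_const 2 hs c (Or.inr hs'.ne)
    exact (Good.L2 hτ0 hτadd hτmp hτerg (hm.toLp _)).congr hτmp hm.coeFn_toLp
  · intro f g _ hf hg h1 h2
    exact h1.add h2 hf hg
  · rw [← closure_subset_iff_isClosed]
    intro f hf
    have hfm := (Lp.stronglyMeasurable f).measurable
    refine Good.closed hτadd hτmp hfm (L1.integrable_coeFn f) fun δ hδ => ?_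
    obtain ⟨g, hg, hfg⟩ := L1_approx _ f hf δ hδ
    exact ⟨g, (Lp.stronglyMeasurable g).measurable, L1.integrable_coeFn g, hg, hfg⟩
  · intro f g hfg _ hf
    exact hf.congr hτmp hfg

end erg3

section cell

variable {d n : ℕ} {Ω : Type*} [MeasurableSpace Ω]

/-- Lattice points of the cube `[0,k)^d`. -/
def Cb (d k : ℕ) : Finset (Zd d) := Bx 1 (fun _ => 0) (fun _ => (k : ℝ))

lemma mem_Cb {k : ℕ} {z : Zd d} : z ∈ Cb d k ↔ ∀ i, 0 ≤ z i ∧ z i < k := by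
  rw [Cb, mem_Bx one_pos, one_smul]
  simp only [halfBox, Set.mem_ofPred_eq, toRd_apply]
  refine forall_congr' fun i => ?_
  exact_mod_cast Iff.rfl

lemma mem_Cb_iff {k : ℕ} {z : Zd d} : z ∈ Cb d k ↔ toRd z ∈ cube d k := by
  rw [Cb, mem_Bx one_pos, one_smul]; rfl

lemma card_Cb (d k : ℕ) : (Cb d k).card = k ^ d := by
  rw [Cb, Bx, Fintype.card_piFinset]
  simp

/-- Local energy density. -/
def dens (τ : Zd d → Ω → Ω) (E0 : Finset (Zd d)) (V : Zd d → Ω → Rn n → ℝ)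
    (ω : Ω) (u : Zd d → Rn n) (z : Zd d) : ℝ :=
  ∑ b ∈ E0, V b (τ z ω) ((‖toRd b‖)⁻¹ • (u (z + b) - u z))

/-- Affine function plus corrector. -/
def aff (F : Rd d →L[ℝ] Rn n) (φ : Zd d → Rn n) : Zd d → Rn n := fun z => F (toRd z) + φ z

/-- cell energy -/
def En (τ : Zd d → Ω → Ω) (E0 : Finset (Zd d)) (V : Zd d → Ω → Rn n → ℝ)
    (F : Rd d →L[ℝ] Rn n) (k : ℕ) (ω : Ω) (φ : Zd d → Rn n) : ℝ :=
  ∑ y ∈ Cb d k, dens τ E0 V ω (aff F φ) y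

lemma energy1_cube (τ : Zd d → Ω → Ω) (E0 : Finset (Zd d)) (V : Zd d → Ω → Rn n → ℝ)
    (F : Rd d →L[ℝ] Rn n) (k : ℕ) (ω : Ω) (φ : Zd d → Rn n) :
    energy1 τ E0 V ω (fun z => F (toRd z) + φ z) (cube d k) = En τ E0 V F k ω φ := by
  have := tsum_Bx one_pos (fun _ => 0) (fun _ : Fin d => (k : ℝ)) (dens τ E0 V ω (aff F φ))
  rw [En, Cb, ← this]
  simp only [one_smul]
  rfl

variable {τ : Zd d → Ω → Ω} {E0 : Finset (Zd d)} {V : Zd d → Ω → Rn n → ℝ}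

lemma dens_nonneg (hVnn : ∀ b ∈ E0, ∀ (ω : Ω) (r : Rn n), 0 ≤ V b ω r) (ω : Ω)
    (u : Zd d → Rn n) (z : Zd d) : 0 ≤ dens τ E0 V ω u z :=
  Finset.sum_nonneg fun b hb => hVnn b hb _ _

lemma En_nonneg (hVnn : ∀ b ∈ E0, ∀ (ω : Ω) (r : Rn n), 0 ≤ V b ω r)
    (F : Rd d →L[ℝ] Rn n) (k : ℕ) (ω : Ω)
    (φ : Zd d → Rn n) : 0 ≤ En τ E0 V F k ω φ :=
  Finset.sum_nonneg fun y _ => dens_nonneg hVnn ω _ y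

lemma dens_continuous (hVcont : ∀ b ∈ E0, ∀ ω : Ω, Continuous (V b ω)) (ω : Ω) (z : Zd d) :
    Continuous fun u : Zd d → Rn n => dens τ E0 V ω u z := by
  unfold dens
  refine continuous_finsetSum _ fun b hb => (hVcont b hb _).comp ?_
  fun_prop

lemma En_continuous (hVcont : ∀ b ∈ E0, ∀ ω : Ω, Continuous (V b ω))
    (F : Rd d →L[ℝ] Rn n) (k : ℕ) (ω : Ω) :
    Continuous fun φ : Zd d → Rn n => En τ E0 V F k ω φ := by
  unfold En
  refine continuous_finsetSum _ fun y _ => (dens_continuous hVcont ω y).comp ?_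
  unfold aff
  fun_prop

lemma En_measurable (hτ : ∀ z, Measurable (τ z))
    (hVmeas : ∀ b ∈ E0, Measurable fun q : Ω × Rn n => V b q.1 q.2)
    (F : Rd d →L[ℝ] Rn n) (k : ℕ) (φ : Zd d → Rn n) :
    Measurable fun ω => En τ E0 V F k ω φ := by
  unfold En dens
  refine Finset.measurable_fun_sum _ fun y _ => Finset.measurable_fun_sum _ fun b hb => ?_
  exact (hVmeas b hb).comp ((hτ y).prodMk measurable_const)

lemma En_integrable {P : Measure Ω} [IsProbabilityMeasure P]
    (hτmp : ∀ z : Zd d, MeasurePreserving (τ z) P P)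
    (hVmeas : ∀ b ∈ E0, Measurable fun q : Ω × Rn n => V b q.1 q.2)
    (hVnn : ∀ b ∈ E0, ∀ (ω : Ω) (r : Rn n), 0 ≤ V b ω r)
    {lam : Zd d → Ω → ℝ} {p c₁ : ℝ}
    (hlam : ∀ b ∈ E0, Integrable (lam b) P)
    (hup : ∀ b ∈ E0, ∀ (ω : Ω) (r : Rn n), V b ω r ≤ c₁ * (1 + lam b ω * (‖r‖ ^ p + 1)))
    (F : Rd d →L[ℝ] Rn n) (k : ℕ) (φ : Zd d → Rn n) :
    Integrable (fun ω => En τ E0 V F k ω φ) P := by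
  unfold En dens
  refine integrable_finsetSum _ fun y _ => integrable_finsetSum _ fun b hb => ?_
  set r := (‖toRd b‖)⁻¹ • (aff F φ (y + b) - aff F φ y)
  have h1 : Integrable (fun ω => c₁ * (1 + lam b (τ y ω) * (‖r‖ ^ p + 1))) P := by
    have : Integrable (fun ω => lam b (τ y ω)) P :=
      (hτmp y).integrable_comp_of_integrable (hlam b hb)
    exact ((integrable_const 1).add (this.mul_const _)).const_mul c₁
  refine h1.mono' ?_ ?_
  · exact ((hVmeas b hb).comp ((hτmp y).measurable.prodMk measurable_const)).aestronglyMeasurable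
  · refine ae_of_all _ fun ω => ?_
    rw [Real.norm_of_nonneg (hVnn b hb _ _)]
    exact hup b hb _ _

/-- Admissible correctors. -/
abbrev Adm (n : ℕ) (E0 : Finset (Zd d)) (k : ℕ) : Type :=
  {φ : Zd d → Rn n // ∀ z : Zd d, infDist (toRd z) (cube d k)ᶜ ≤ irange d E0 → φ z = 0}

lemma irange_nonneg (E0 : Finset (Zd d)) : 0 ≤ irange d E0 :=
  le_max_of_le_left (by positivity)

lemma Adm.bdd {k : ℕ} (φ : Adm n E0 k) : ∃ C : ℝ, ∀ z, ‖φ.1 z‖ ≤ C := by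
  refine ⟨∑ z ∈ Cb d k, ‖φ.1 z‖, fun z => ?_⟩
  by_cases hz : z ∈ Cb d k
  · exact Finset.single_le_sum (f := fun z => ‖φ.1 z‖) (fun _ _ => norm_nonneg _) hz
  · rw [φ.2 z, norm_zero]
    · exact Finset.sum_nonneg fun _ _ => norm_nonneg _
    · rw [infDist_zero_of_mem]
      · exact irange_nonneg E0
      · rw [mem_Cb_iff] at hz
        exact hz

/-- running minima -/
def runMin (g : ℕ → Ω → ℝ) : ℕ → Ω → ℝ
  | 0 => g 0
  | m + 1 => fun ω => min (runMin g m ω) (g (m + 1) ω)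

lemma runMin_le (g : ℕ → Ω → ℝ) (ω : Ω) : ∀ m i, i ≤ m → runMin g m ω ≤ g i ω
  | 0, i, h => by
    have : i = 0 := by omega
    rw [this]; rfl
  | m + 1, i, h => by
    by_cases hi : i = m + 1
    · rw [hi]; exact min_le_right _ _
    · exact (min_le_left _ _).trans (runMin_le g ω m i (by omega))

lemma runMin_attained (g : ℕ → Ω → ℝ) (ω : Ω) : ∀ m, ∃ i, i ≤ m ∧ g i ω = runMin g m ω
  | 0 => ⟨0, le_rfl, rfl⟩
  | m + 1 => by
    obtain ⟨i, hi, he⟩ := runMin_attained g ω m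
    by_cases h : runMin g m ω ≤ g (m + 1) ω
    · exact ⟨i, by omega, by rw [he]; exact (min_eq_left h).symm⟩
    · exact ⟨m + 1, le_rfl, (min_eq_right (not_le.1 h).le).symm⟩

lemma runMin_measurable (g : ℕ → Ω → ℝ) (hg : ∀ i, Measurable (g i)) :
    ∀ m, Measurable (runMin g m)
  | 0 => hg 0
  | m + 1 => (runMin_measurable g hg m).min (hg (m + 1))

lemma cell_exists {P : Measure Ω} [IsProbabilityMeasure P]
    (hτmp : ∀ z : Zd d, MeasurePreserving (τ z) P P)
    (hVmeas : ∀ b ∈ E0, Measurable fun q : Ω × Rn n => V b q.1 q.2)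
    (hVcont : ∀ b ∈ E0, ∀ ω : Ω, Continuous (V b ω))
    (hVnn : ∀ b ∈ E0, ∀ (ω : Ω) (r : Rn n), 0 ≤ V b ω r)
    {lam : Zd d → Ω → ℝ} {p c₁ : ℝ}
    (hlam : ∀ b ∈ E0, Integrable (lam b) P)
    (hup : ∀ b ∈ E0, ∀ (ω : Ω) (r : Rn n), V b ω r ≤ c₁ * (1 + lam b ω * (‖r‖ ^ p + 1)))
    (F : Rd d →L[ℝ] Rn n) (k : ℕ) (δ : ℝ) (hδ : 0 < δ) :
    ∃ (f : Ω → ℝ) (C : ℝ), Integrable f P ∧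
      (∀ ω, ∃ φ : Adm n E0 k, (∀ z, ‖φ.1 z‖ ≤ C) ∧ En τ E0 V F k ω φ.1 = f ω) ∧
      ∫ ω, f ω ∂P < ∫ ω, mF τ E0 V ω F (cube d k) ∂P + δ := by
  haveI : Nonempty (Adm n E0 k) := ⟨⟨fun _ => 0, fun _ _ => rfl⟩⟩
  haveI : SecondCountableTopology (Zd d → Rn n) := inferInstance
  haveI : SecondCountableTopology (Adm n E0 k) := TopologicalSpace.Subtype.secondCountableTopology _
  haveI : TopologicalSpace.SeparableSpace (Adm n E0 k) := inferInstance
  let s : ℕ → Adm n E0 k := TopologicalSpace.denseSeq (Adm n E0 k)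
  let g : ℕ → Ω → ℝ := fun i ω => En τ E0 V F k ω (s i).1
  have hgm : ∀ i, Measurable (g i) := fun i =>
    En_measurable (fun z => (hτmp z).measurable) hVmeas F k _
  have hgi : ∀ i, Integrable (g i) P := fun i =>
    En_integrable hτmp hVmeas hVnn hlam hup F k _
  have hnn : ∀ m ω, 0 ≤ runMin g m ω := by
    intro m ω
    obtain ⟨i, _, h⟩ := runMin_attained g ω m
    rw [← h]
    exact En_nonneg hVnn F k ω _
  have hbd : ∀ m ω, ‖runMin g m ω‖ ≤ g 0 ω := by
    intro m ω
    rw [Real.norm_of_nonneg (hnn m ω)]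
    exact runMin_le g ω m 0 (Nat.zero_le m)
  have hmF : ∀ ω, mF τ E0 V ω F (cube d k) = ⨅ φ : Adm n E0 k, En τ E0 V F k ω φ.1 := by
    intro ω
    unfold mF
    exact iInf_congr fun φ => energy1_cube τ E0 V F k ω φ.1
  have hbb : ∀ ω, BddBelow (Set.range fun φ : Adm n E0 k => En τ E0 V F k ω φ.1) := fun ω =>
    ⟨0, by rintro _ ⟨φ, rfl⟩; exact En_nonneg hVnn F k ω _⟩
  have hlim : ∀ ω, Tendsto (fun m => runMin g m ω) atTop (𝓝 (mF τ E0 V ω F (cube d k))) := by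
    intro ω
    rw [hmF, Metric.tendsto_atTop]
    intro η hη
    obtain ⟨φ, hφ⟩ := exists_lt_of_ciInf_lt (lt_add_of_pos_right
      (⨅ φ : Adm n E0 k, En τ E0 V F k ω φ.1) hη)
    have hc : Continuous fun φ : Adm n E0 k => En τ E0 V F k ω φ.1 :=
      (En_continuous hVcont F k ω).comp continuous_subtype_val
    obtain ⟨x, hx, i, rfl⟩ := (TopologicalSpace.denseRange_denseSeq (Adm n E0 k)).inter_open_nonempty
      _ (isOpen_lt hc continuous_const) ⟨φ, hφ⟩
    refine ⟨i, fun m hm => ?_⟩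
    have h1 := runMin_le g ω m i hm
    have h2 : ⨅ φ : Adm n E0 k, En τ E0 V F k ω φ.1 ≤ runMin g m ω := by
      obtain ⟨j, _, h⟩ := runMin_attained g ω m
      rw [← h]
      exact ciInf_le (hbb ω) (s j)
    have h3 : g i ω < _ := hx
    rw [Real.dist_eq, abs_of_nonneg (by linarith)]
    linarith
  have hconv := tendsto_integral_of_dominated_convergence (μ := P) (F := fun m ω => runMin g m ω)
    (f := fun ω => mF τ E0 V ω F (cube d k)) (g 0)
    (fun m => (runMin_measurable g hgm m).aestronglyMeasurable) (hgi 0)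
    (fun m => ae_of_all _ fun ω => hbd m ω) (ae_of_all _ hlim)
  obtain ⟨m, hm⟩ := (hconv.eventually (gt_mem_nhds (lt_add_of_pos_right _ hδ))).exists
  have hC : ∀ i, ∃ C : ℝ, ∀ z, ‖(s i).1 z‖ ≤ C := fun i => (s i).bdd
  choose C hC using hC
  have hC0 : ∀ i, 0 ≤ C i := fun i => (norm_nonneg _).trans (hC i 0)
  refine ⟨runMin g m, ∑ i ∈ Finset.range (m + 1), C i,
    (hgi 0).mono' (runMin_measurable g hgm m).aestronglyMeasurable (ae_of_all _ fun ω => hbd m ω),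
    fun ω => ?_, hm⟩
  obtain ⟨i, hi, h⟩ := runMin_attained g ω m
  exact ⟨s i, fun z => (hC i z).trans (Finset.single_le_sum (f := C) (fun i _ => hC0 i)
    (Finset.mem_range.2 (by omega))), h⟩

lemma cell_W0 {P : Measure Ω} [IsProbabilityMeasure P]
    (hτmp : ∀ z : Zd d, MeasurePreserving (τ z) P P)
    (hVmeas : ∀ b ∈ E0, Measurable fun q : Ω × Rn n => V b q.1 q.2)
    (hVcont : ∀ b ∈ E0, ∀ ω : Ω, Continuous (V b ω))
    (hVnn : ∀ b ∈ E0, ∀ (ω : Ω) (r : Rn n), 0 ≤ V b ω r)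
    {lam : Zd d → Ω → ℝ} {p c₁ : ℝ}
    (hlam : ∀ b ∈ E0, Integrable (lam b) P)
    (hup : ∀ b ∈ E0, ∀ (ω : Ω) (r : Rn n), V b ω r ≤ c₁ * (1 + lam b ω * (‖r‖ ^ p + 1)))
    (F : Rd d →L[ℝ] Rn n) (δ : ℝ) (hδ : 0 < δ) :
    ∃ (k : ℕ) (f : Ω → ℝ) (C : ℝ), 0 < k ∧ Integrable f P ∧
      (∀ ω, ∃ φ : Adm n E0 k, (∀ z, ‖φ.1 z‖ ≤ C) ∧ En τ E0 V F k ω φ.1 = f ω) ∧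
      ((k : ℝ) ^ d)⁻¹ * ∫ ω, f ω ∂P < W0 P τ E0 V F + δ := by
  haveI : Nonempty {k : ℕ // 0 < k} := ⟨⟨1, one_pos⟩⟩
  obtain ⟨⟨k, hk⟩, hlt⟩ := exists_lt_of_ciInf_lt (lt_add_of_pos_right (W0 P τ E0 V F) (half_pos hδ))
  have hkd : (0 : ℝ) < (k : ℝ) ^ d := by positivity
  obtain ⟨f, C, hf, hφ, hI⟩ := cell_exists hτmp hVmeas hVcont hVnn hlam hup F k
    ((k : ℝ) ^ d * (δ / 2)) (by positivity)
  refine ⟨k, f, C, hk, hf, hφ, ?_⟩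
  have h1 := mul_lt_mul_of_pos_left hI (inv_pos.2 hkd)
  rw [mul_add, inv_mul_cancel_left₀ hkd.ne'] at h1
  simp only at hlt
  linarith

end cell

section tiling

variable {d n : ℕ} {Ω : Type*} [MeasurableSpace Ω]
variable {τ : Zd d → Ω → Ω} {E0 : Finset (Zd d)} {V : Zd d → Ω → Rn n → ℝ}

lemma toRd_add (x y : Zd d) : toRd (x + y) = toRd x + toRd y := by
  ext i; simp

lemma toRd_sub (x y : Zd d) : toRd (x - y) = toRd x - toRd y := by
  ext i; simp

lemma norm_le_irange {b : Zd d} (hb : b ∈ E0) : ‖toRd b‖ ≤ irange d E0 := by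
  refine le_max_of_le_right (le_csSup ?_ ⟨b, hb, rfl⟩)
  exact (E0.finite_toSet.image _).bddAbove

/-- Position inside the tile, for offset `j`. -/
def pos (k : ℕ) (j z : Zd d) : Zd d := fun i => (z i + j i) % (k : ℤ)

lemma pos_mem {k : ℕ} (hk : 0 < k) (j z : Zd d) : pos k j z ∈ Cb d k := by
  rw [mem_Cb]
  intro i
  have : (0 : ℤ) < k := by exact_mod_cast hk
  exact ⟨Int.emod_nonneg _ this.ne', Int.emod_lt_of_pos _ this⟩

lemma pos_add {k : ℕ} (j z b : Zd d) (h : pos k j z + b ∈ Cb d k) :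
    pos k j (z + b) = pos k j z + b := by
  rw [mem_Cb] at h
  ext i
  have h1 := h i
  have h2 : (pos k j z + b) i = (pos k j z + b) i % k := (Int.emod_eq_of_lt h1.1 h1.2).symm
  rw [h2]
  simp only [pos, Pi.add_apply]
  rw [Int.emod_add_emod]
  congr 1; ring

/-- Glued corrector. -/
def glue (k : ℕ) (ψ : Zd d → Zd d → Rn n) (j : Zd d) : Zd d → Rn n :=
  fun z => ψ (z - pos k j z) (pos k j z)

lemma glue_add {k : ℕ} (ψ : Zd d → Adm n E0 k) (j z b : Zd d) (hb : b ∈ E0) :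
    glue k (fun x => (ψ x).1) j (z + b) = (ψ (z - pos k j z)).1 (pos k j z + b) := by
  unfold glue
  by_cases h : pos k j z + b ∈ Cb d k
  · rw [pos_add j z b h, add_sub_add_right_eq_sub]
  · have h1 : (ψ (z - pos k j z)).1 (pos k j z + b) = 0 := by
      refine (ψ _).2 _ ?_
      rw [infDist_zero_of_mem]
      · exact irange_nonneg E0
      · rw [mem_Cb_iff] at h
        exact h
    rw [h1]
    refine (ψ _).2 _ ?_
    have h2 : pos k j (z + b) - b ∉ Cb d k := by
      intro h2
      have h3 := pos_add j (z + b) (-b) (by rwa [← sub_eq_add_neg])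
      rw [add_neg_cancel_right] at h3
      apply h
      rw [h3, neg_add_cancel_right]
      by_contra hc
      -- membership always holds unless k = 0
      rcases Nat.eq_zero_or_pos k with hk | hk
      · rw [mem_Cb] at h2
        have hcard := card_Cb d k
        apply hc
        rw [mem_Cb]
        intro i
        have := h2 i
        rw [hk] at this
        omega
      · exact hc (pos_mem hk _ _)
    rw [mem_Cb_iff] at h2
    refine (infDist_le_dist_of_mem (y := toRd (pos k j (z + b) - b)) h2).trans ?_
    rw [toRd_sub, dist_eq_norm, sub_sub_cancel]
    exact norm_le_irange hb

lemma dens_glue (hτadd : ∀ x y : Zd d, τ (x + y) = τ x ∘ τ y) (F : Rd d →L[ℝ] Rn n)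
    {k : ℕ} (ψ : Zd d → Adm n E0 k) (j z : Zd d) (ω : Ω) :
    dens τ E0 V ω (aff F (glue k (fun x => (ψ x).1) j)) z
      = dens τ E0 V (τ (z - pos k j z) ω) (aff F (ψ (z - pos k j z)).1) (pos k j z) := by
  unfold dens
  refine Finset.sum_congr rfl fun b hb => ?_
  rw [← Function.comp_apply (f := τ (pos k j z)), ← hτadd, add_sub_cancel]
  congr 2
  unfold aff
  rw [glue_add ψ j z b hb, toRd_add, toRd_add, map_add, map_add]
  unfold glue
  abel

lemma tiling (hτadd : ∀ x y : Zd d, τ (x + y) = τ x ∘ τ y)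
    (hVnn : ∀ b ∈ E0, ∀ (ω : Ω) (r : Rn n), 0 ≤ V b ω r) (F : Rd d →L[ℝ] Rn n)
    {k : ℕ} (hk : 0 < k) (ψ : Zd d → Adm n E0 k) (ω : Ω) (B B' : Finset (Zd d))
    (hBB : ∀ z ∈ B, ∀ y ∈ Cb d k, z - y ∈ B') :
    ∃ j : Zd d, ∑ z ∈ B, dens τ E0 V ω (aff F (glue k (fun x => (ψ x).1) j)) z
      ≤ ((k : ℝ) ^ d)⁻¹ * ∑ x ∈ B', En τ E0 V F k (τ x ω) (ψ x).1 := by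
  have hkd : (0 : ℝ) < (k : ℝ) ^ d := by positivity
  have hkz : (0 : ℤ) < k := by exact_mod_cast hk
  set D : Zd d → Zd d → ℝ := fun x y => dens τ E0 V (τ x ω) (aff F (ψ x).1) y with hD
  have hD0 : ∀ x y, 0 ≤ D x y := fun x y => dens_nonneg hVnn _ _ _
  set S := ∑ x ∈ B', En τ E0 V F k (τ x ω) (ψ x).1 with hS
  have hne : (Cb d k).Nonempty := ⟨0, mem_Cb.2 fun i => ⟨le_rfl, hkz⟩⟩
  have key : ∑ j ∈ Cb d k, ∑ z ∈ B, dens τ E0 V ω (aff F (glue k (fun x => (ψ x).1) j)) z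
      ≤ ∑ j ∈ Cb d k, ((k : ℝ) ^ d)⁻¹ * S := by
    rw [Finset.sum_const, card_Cb, nsmul_eq_mul]
    push_cast
    rw [mul_inv_cancel_left₀ hkd.ne', Finset.sum_comm]
    have h1 : ∀ z ∈ B, ∑ j ∈ Cb d k, dens τ E0 V ω (aff F (glue k (fun x => (ψ x).1) j)) z
        = ∑ y ∈ Cb d k, D (z - y) y := by
      intro z _
      refine Finset.sum_nbij' (fun j => pos k j z) (fun y => pos k (-z) y) ?_ ?_ ?_ ?_ ?_
      · intro j _; exact pos_mem hk _ _
      · intro j _; exact pos_mem hk _ _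
      · intro j hj
        ext i
        have hji := mem_Cb.1 hj i
        simp only [pos, Pi.neg_apply]
        rw [Int.emod_add_emod, show z i + j i + -z i = j i by ring]
        exact Int.emod_eq_of_lt hji.1 hji.2
      · intro y hy
        ext i
        have hji := mem_Cb.1 hy i
        simp only [pos, Pi.neg_apply]
        rw [Int.add_emod_emod, show z i + (y i + -z i) = y i by ring]
        exact Int.emod_eq_of_lt hji.1 hji.2
      · intro j _
        exact dens_glue hτadd F ψ j z ω
    rw [Finset.sum_congr rfl h1, Finset.sum_comm, hS]
    unfold En
    rw [Finset.sum_comm (s := B')]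
    refine Finset.sum_le_sum fun y hy => ?_
    have h2 : ∑ z ∈ B, D (z - y) y = ∑ x ∈ B.image (fun z => z - y), D x y := by
      rw [Finset.sum_image]
      intro a _ b _ hab
      exact sub_left_injective hab
    rw [h2]
    refine Finset.sum_le_sum_of_subset_of_nonneg ?_ fun x _ _ => hD0 x y
    intro x hx
    obtain ⟨z, hz, rfl⟩ := Finset.mem_image.1 hx
    exact hBB z hz y hy
  obtain ⟨j, _, hj⟩ := Finset.exists_le_of_sum_le hne key
  exact ⟨j, hj⟩

lemma glue_bdd {k : ℕ} (ψ : Zd d → Adm n E0 k) {C : ℝ} (hC : ∀ x z, ‖(ψ x).1 z‖ ≤ C) (j z : Zd d) :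
    ‖glue k (fun x => (ψ x).1) j z‖ ≤ C := hC _ _

end tiling

section upper

variable {d n : ℕ} {Ω : Type*} [MeasurableSpace Ω]
variable {τ : Zd d → Ω → Ω} {E0 : Finset (Zd d)} {V : Zd d → Ω → Rn n → ℝ}

lemma upper_bound (hτadd : ∀ x y : Zd d, τ (x + y) = τ x ∘ τ y)
    (hVnn : ∀ b ∈ E0, ∀ (ω : Ω) (r : Rn n), 0 ≤ V b ω r) (F : Rd d →L[ℝ] Rn n)
    {k : ℕ} (hk : 0 < k) (f : Ω → ℝ) (C I : ℝ)
    (hφ : ∀ ω, ∃ φ : Adm n E0 k, (∀ z, ‖φ.1 z‖ ≤ C) ∧ En τ E0 V F k ω φ.1 = f ω)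
    (ω : Ω) (hω : ∀ a b, Tendsto (fun ε => ε ^ d * ∑ z ∈ Bx ε a b, f (τ z ω)) (𝓝[>] 0)
      (𝓝 (vol a b * I)))
    (a b : Fin d → ℝ) (S : ℝ) (hS : ((k : ℝ) ^ d)⁻¹ * (vol a b * I) < S) :
    ∀ᶠ ε in 𝓝[>] (0 : ℝ), ∃ φ : Zd d → Rn n, (∀ z, ‖φ z‖ ≤ C) ∧
      ε ^ d * ∑ z ∈ Bx ε a b, dens τ E0 V ω (aff F φ) z ≤ S := by
  have hc : Continuous fun η : ℝ => ((k : ℝ) ^ d)⁻¹ * (vol (fun i => a i - η) b * I) := by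
    unfold vol
    fun_prop
  have h0 : ∀ᶠ η in 𝓝 (0 : ℝ), ((k : ℝ) ^ d)⁻¹ * (vol (fun i => a i - η) b * I) < S := by
    refine hc.continuousAt.eventually_lt_const ?_
    simpa using hS
  obtain ⟨η, hη, hηpos⟩ := ((h0.filter_mono nhdsWithin_le_nhds).and
    (self_mem_nhdsWithin : Ioi (0 : ℝ) ∈ 𝓝[>] (0 : ℝ))).exists
  have hηpos : 0 < η := hηpos
  have h1 := ((hω (fun i => a i - η) b).const_mul ((k : ℝ) ^ d)⁻¹).eventually_lt_const hη
  have hkη : 0 < η / k := by positivity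
  filter_upwards [h1, self_mem_nhdsWithin,
    nhdsWithin_le_nhds (Iio_mem_nhds hkη)] with ε hε hε0 hεk
  have hε0 : 0 < ε := hε0
  have hεk : ε < η / k := hεk
  rw [lt_div_iff₀ (by positivity)] at hεk
  choose ψ hψ1 hψ2 using fun x : Zd d => hφ (τ x ω)
  obtain ⟨j, hj⟩ := tiling (V := V) hτadd hVnn F hk ψ ω (Bx ε a b) (Bx ε (fun i => a i - η) b) (by
    intro z hz y hy
    rw [mem_Bx hε0] at hz ⊢
    rw [mem_Cb] at hy
    intro i
    have h2 := hz i
    have h3 := hy i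
    have h4 : (0 : ℝ) ≤ y i := by exact_mod_cast h3.1
    have h5 : (y i : ℝ) ≤ k := by exact_mod_cast h3.2.le
    simp only [PiLp.smul_apply, toRd_apply, smul_eq_mul, Pi.sub_apply, Int.cast_sub] at h2 ⊢
    constructor <;> nlinarith [mul_nonneg hε0.le h4, mul_le_mul_of_nonneg_left h5 hε0.le])
  refine ⟨_, glue_bdd ψ hψ1 j, ?_⟩
  refine (mul_le_mul_of_nonneg_left hj (by positivity)).trans ?_
  simp only [hψ2]
  rw [mul_left_comm]
  exact hε.le

lemma W0_nonneg (hVnn : ∀ b ∈ E0, ∀ (ω : Ω) (r : Rn n), 0 ≤ V b ω r) (P : Measure Ω)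
    (F : Rd d →L[ℝ] Rn n) : 0 ≤ W0 P τ E0 V F := by
  unfold W0
  refine Real.iInf_nonneg fun k => mul_nonneg (by positivity) (integral_nonneg fun ω => ?_)
  refine Real.iInf_nonneg fun φ => tsum_nonneg fun z => ?_
  split_ifs
  · exact Finset.sum_nonneg fun b hb => hVnn b hb _ _
  · exact le_rfl

end upper

section perturb

variable {d n : ℕ} {Ω : Type*} [MeasurableSpace Ω]
variable {τ : Zd d → Ω → Ω} {E0 : Finset (Zd d)} {V : Zd d → Ω → Rn n → ℝ}

lemma perturb (hn : 1 ≤ n) {p c₁ : ℝ} (hp : 1 < p) (hc₁ : 0 < c₁)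
    (hVcont : ∀ b ∈ E0, ∀ ω : Ω, Continuous (V b ω))
    (hVnn : ∀ b ∈ E0, ∀ (ω : Ω) (r : Rn n), 0 ≤ V b ω r)
    (lam : Ω → ℝ) (e : Zd d) (he : e ∈ E0) (he1 : ‖toRd e‖ = 1)
    (hlow : ∀ (ω : Ω) (r : Rn n), lam ω * (‖r‖ ^ p / c₁ - c₁) ≤ V e ω r)
    (F : Rd d →L[ℝ] Rn n) (ω : Ω) {ε : ℝ} (hε : 0 < ε) (B : Finset (Zd d)) {z0 : Zd d}
    (hz0 : z0 ∈ B) {c0 : ℝ} (hc0 : 0 < c0) (hlam : c0 ≤ lam (τ z0 ω))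
    {T C : ℝ} (hT : 0 ≤ T) (φ : Zd d → Rn n) (hφ : ∀ z, ‖φ z‖ ≤ C)
    (hE : ε ^ d * ∑ z ∈ B, dens τ E0 V ω (aff F φ) z ≤ T) :
    ∃ φ' : Zd d → Rn n, (∀ z, z ≠ z0 → φ' z = φ z) ∧
      ε ^ d * ∑ z ∈ B, dens τ E0 V ω (aff F φ') z = T ∧
      ∃ r : ℝ, 0 ≤ r ∧ ε ^ d * r ^ p ≤ c₁ * (T / c0 + c₁ * ε ^ d) ∧
        ‖φ' z0‖ ≤ C + ‖F (toRd e)‖ + r := by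
  have hεd : 0 < ε ^ d := by positivity
  have hene : e ≠ 0 := by
    rintro rfl
    have : toRd (0 : Zd d) = 0 := by ext i; simp
    rw [this, norm_zero] at he1
    exact zero_ne_one he1
  let v : Rn n := EuclideanSpace.single ⟨0, hn⟩ (1 : ℝ)
  have hv : ‖v‖ = 1 := by simp [v]
  let Φ : ℝ → Zd d → Rn n := fun t => Function.update φ z0 (φ z0 + t • v)
  let G : ℝ → ℝ := fun t => ε ^ d * ∑ z ∈ B, dens τ E0 V ω (aff F (Φ t)) z
  let r : ℝ → Rn n := fun t => F (toRd e) + φ (z0 + e) - (φ z0 + t • v)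
  have hΦc : Continuous Φ := by
    refine Continuous.update continuous_const _ ?_
    fun_prop
  have hG : Continuous G := by
    refine continuous_const.mul (continuous_finsetSum _ fun z _ => ?_)
    refine (dens_continuous hVcont ω z).comp ?_
    unfold aff
    refine continuous_pi fun x => ?_
    exact continuous_const.add ((continuous_apply x).comp hΦc)
  have hlo : ∀ t, ε ^ d * (lam (τ z0 ω) * (‖r t‖ ^ p / c₁ - c₁)) ≤ G t := by
    intro t
    refine mul_le_mul_of_nonneg_left ?_ hεd.le
    refine le_trans ?_ (Finset.single_le_sum
      (f := fun z => dens τ E0 V ω (aff F (Φ t)) z) (fun z _ => dens_nonneg hVnn _ _ _) hz0)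
    refine le_trans ?_ (Finset.single_le_sum
      (f := fun b => V b (τ z0 ω) ((‖toRd b‖)⁻¹ • (aff F (Φ t) (z0 + b) - aff F (Φ t) z0)))
      (fun b hb => hVnn b hb _ _) he)
    refine (hlow (τ z0 ω) (r t)).trans (le_of_eq ?_)
    simp only [he1, inv_one, one_smul]
    congr 1
    have h1 : Φ t (z0 + e) = φ (z0 + e) := by
      simp only [Φ]
      rw [Function.update_of_ne]
      simpa using hene
    have h2 : Φ t z0 = φ z0 + t • v := by simp [Φ]
    simp only [aff, h1, h2, toRd_add, map_add, r]
    abel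
  have hr : ∀ t, G t ≤ T → ε ^ d * ‖r t‖ ^ p ≤ c₁ * (T / c0 + c₁ * ε ^ d) := by
    intro t ht
    have h1 := (hlo t).trans ht
    set X := ‖r t‖ ^ p / c₁ - c₁ with hX
    have hXe : ‖r t‖ ^ p = c₁ * (X + c₁) := by rw [hX]; field_simp; ring
    rw [hXe]
    have h2 : ε ^ d * X ≤ T / c0 := by
      by_cases hX0 : 0 ≤ X
      · rw [le_div_iff₀ hc0]
        refine le_trans ?_ h1
        have := mul_le_mul_of_nonneg_left (mul_le_mul_of_nonneg_right hlam hX0) hεd.le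
        linarith
      · have h3 : ε ^ d * X ≤ 0 := mul_nonpos_of_nonneg_of_nonpos hεd.le (not_le.1 hX0).le
        exact h3.trans (by positivity)
    nlinarith
  have hG0 : G 0 ≤ T := by
    have : Φ 0 = φ := by simp [Φ]
    simp only [G, this]
    exact hE
  have hbig : ∃ t, 0 ≤ t ∧ T ≤ G t := by
    by_contra hcon
    push Not at hcon
    set K := c₁ * (T / c0 + c₁ * ε ^ d) with hK
    have hK0 : 0 ≤ K := by positivity
    set w := F (toRd e) + φ (z0 + e) - φ z0 with hw
    set t := ‖w‖ + 1 + K / ε ^ d with ht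
    have ht0 : 0 ≤ t := by positivity
    have h1 := hr t (hcon t ht0).le
    have h2 : 1 + K / ε ^ d ≤ ‖r t‖ := by
      have h3 : r t = w - t • v := by simp only [r, hw]; abel
      have h4 := norm_sub_norm_le (t • v) w
      rw [norm_smul, hv, mul_one, Real.norm_of_nonneg ht0, norm_sub_rev (t • v) w, ← h3] at h4
      linarith
    have h5 : (1 : ℝ) ≤ ‖r t‖ := le_trans (by linarith [div_nonneg hK0 hεd.le]) h2
    have h6 : ‖r t‖ ≤ ‖r t‖ ^ p := Real.self_le_rpow_of_one_le h5 hp.le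
    have h7 : ε ^ d * (1 + K / ε ^ d) ≤ K :=
      (mul_le_mul_of_nonneg_left (h2.trans h6) hεd.le).trans h1
    rw [mul_add, mul_div_cancel₀ _ hεd.ne'] at h7
    linarith
  obtain ⟨t1, ht1, hTt⟩ := hbig
  obtain ⟨t, _, htT⟩ := intermediate_value_Icc ht1 hG.continuousOn ⟨hG0, hTt⟩
  refine ⟨Φ t, fun z hz => Function.update_of_ne hz _ _, htT, ‖r t‖, norm_nonneg _,
    hr t htT.le, ?_⟩
  have h2 : Φ t z0 = F (toRd e) + φ (z0 + e) - r t := by simp [Φ, r]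
  rw [h2]
  refine (norm_sub_le _ _).trans ?_
  have := norm_add_le (F (toRd e)) (φ (z0 + e))
  have := hφ (z0 + e)
  linarith

/-- Error function of the perturbed corrector. -/
def errN (d : ℕ) (p q c₁ c0 T C M cb ε : ℝ) : ℝ :=
  cb * (ε * C) ^ q + (ε ^ d + ε ^ p * (2 ^ p * (ε ^ d * M ^ p + c₁ * (T / c0 + c₁ * ε ^ d))))

lemma errN_tendsto {d : ℕ} (hd : 0 < d) {p q c₁ c0 T C M : ℝ} (hp : 0 < p) (hq : 0 < q)
    {cb : ℝ → ℝ} {v : ℝ} (hcb : Tendsto cb (𝓝[>] 0) (𝓝 v)) :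
    Tendsto (fun ε => errN d p q c₁ c0 T C M (cb ε) ε) (𝓝[>] 0) (𝓝 0) := by
  have hid : Tendsto (fun ε : ℝ => ε) (𝓝[>] 0) (𝓝 0) := tendsto_id.mono_left nhdsWithin_le_nhds
  have h1 : Tendsto (fun ε : ℝ => (ε * C) ^ q) (𝓝[>] 0) (𝓝 0) := by
    have := ((hid.mul_const C).rpow_const (p := q) (Or.inr hq.le))
    simpa [Real.zero_rpow hq.ne'] using this
  have h2 : Tendsto (fun ε : ℝ => ε ^ p) (𝓝[>] 0) (𝓝 0) := by
    have := (hid.rpow_const (p := p) (Or.inr hp.le))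
    simpa [Real.zero_rpow hp.ne'] using this
  have h3 : Tendsto (fun ε : ℝ => ε ^ d) (𝓝[>] 0) (𝓝 0) := by
    have := hid.pow d
    simpa [zero_pow hd.ne'] using this
  have h4 := (hcb.mul h1).add (h3.add (h2.mul (((h3.mul_const (M ^ p)).add
    (((h3.const_mul c₁).const_add (T / c0)).const_mul c₁)).const_mul (2 ^ p))))
  simpa [errN] using h4

lemma norm_bound {p q c₁ c0 T C M : ℝ} (hp : 1 < p) (hq : 0 < q) (hqp : q ≤ p) (hC : 0 ≤ C)
    (hM : 0 ≤ M) {ε : ℝ} (hε : 0 < ε) (B : Finset (Zd d)) (z0 : Zd d) (φ' : Zd d → Rn n)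
    (hφ : ∀ z, z ≠ z0 → ‖φ' z‖ ≤ C) {r : ℝ} (hr : 0 ≤ r)
    (hrp : ε ^ d * r ^ p ≤ c₁ * (T / c0 + c₁ * ε ^ d)) (h0 : ‖φ' z0‖ ≤ M + r) :
    ε ^ d * ∑ z ∈ B, ‖ε • φ' z‖ ^ q ≤ errN d p q c₁ c0 T C M (ε ^ d * B.card) ε := by
  have hεd : 0 < ε ^ d := by positivity
  have h1 : ∀ z ∈ B, ‖ε • φ' z‖ ^ q ≤ (ε * C) ^ q + if z = z0 then ‖ε • φ' z0‖ ^ q else 0 := by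
    intro z _
    split_ifs with h
    · rw [h]
      exact le_add_of_nonneg_left (by positivity)
    · rw [add_zero, norm_smul, Real.norm_of_nonneg hε.le]
      exact Real.rpow_le_rpow (by positivity) (mul_le_mul_of_nonneg_left (hφ z h) hε.le) hq.le
  have h2 : ∑ z ∈ B, ‖ε • φ' z‖ ^ q ≤ B.card * (ε * C) ^ q + ‖ε • φ' z0‖ ^ q := by
    refine (Finset.sum_le_sum h1).trans ?_
    rw [Finset.sum_add_distrib, Finset.sum_const, nsmul_eq_mul, Finset.sum_ite_eq']
    gcongr
    split_ifs
    · exact le_rfl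
    · positivity
  have h3 : ‖ε • φ' z0‖ ^ q ≤ 1 + ‖ε • φ' z0‖ ^ p := by
    by_cases h : ‖ε • φ' z0‖ ≤ 1
    · have := Real.rpow_le_one (norm_nonneg _) h hq.le
      have : 0 ≤ ‖ε • φ' z0‖ ^ p := by positivity
      linarith
    · have := Real.rpow_le_rpow_of_exponent_le (not_le.1 h).le hqp
      linarith
  have h4 : ‖ε • φ' z0‖ ^ p ≤ ε ^ p * (2 ^ p * (M ^ p + r ^ p)) := by
    rw [norm_smul, Real.norm_of_nonneg hε.le, Real.mul_rpow hε.le (norm_nonneg _)]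
    refine mul_le_mul_of_nonneg_left ?_ (by positivity)
    have h5 : ‖φ' z0‖ ≤ 2 * max M r := by
      have := le_max_left M r
      have := le_max_right M r
      linarith
    have h6 := Real.rpow_le_rpow (norm_nonneg _) h5 (zero_le_one.trans hp.le)
    rw [Real.mul_rpow zero_le_two (le_max_of_le_left hM)] at h6
    refine h6.trans (mul_le_mul_of_nonneg_left ?_ (by positivity))
    have : 0 ≤ M ^ p := by positivity
    have : 0 ≤ r ^ p := by positivity
    rcases max_choice M r with h | h <;> rw [h] <;> linarith
  calc ε ^ d * ∑ z ∈ B, ‖ε • φ' z‖ ^ q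
      ≤ ε ^ d * (B.card * (ε * C) ^ q + (1 + ε ^ p * (2 ^ p * (M ^ p + r ^ p)))) := by
        refine mul_le_mul_of_nonneg_left ?_ hεd.le
        linarith
    _ = ε ^ d * B.card * (ε * C) ^ q
        + (ε ^ d + ε ^ p * (2 ^ p * (ε ^ d * M ^ p + ε ^ d * r ^ p))) := by ring
    _ ≤ _ := by
        unfold errN
        gcongr

lemma approx (hd : 0 < d) (hn : 1 ≤ n) {p q c₁ : ℝ} (hp : 1 < p) (hq : 0 < q) (hqp : q ≤ p)
    (hc₁ : 0 < c₁)
    (hVcont : ∀ b ∈ E0, ∀ ω : Ω, Continuous (V b ω))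
    (hVnn : ∀ b ∈ E0, ∀ (ω : Ω) (r : Rn n), 0 ≤ V b ω r)
    (lam : Ω → ℝ) (e : Zd d) (he : e ∈ E0) (he1 : ‖toRd e‖ = 1)
    (hlow : ∀ (ω : Ω) (r : Rn n), lam ω * (‖r‖ ^ p / c₁ - c₁) ≤ V e ω r)
    (F : Rd d →L[ℝ] Rn n) (ω : Ω) (a b : Fin d → ℝ) {c0 : ℝ} (hc0 : 0 < c0)
    {T : ℝ} (hT : 0 ≤ T)
    (hlam : 0 < T → ∀ᶠ ε in 𝓝[>] (0 : ℝ), ∃ z0 ∈ Bx ε a b, c0 ≤ lam (τ z0 ω))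
    {δ : ℝ} (hδ : 0 < δ) {C : ℝ} (hC : 0 ≤ C)
    (hub : ∀ᶠ ε in 𝓝[>] (0 : ℝ), ∃ φ : Zd d → Rn n, (∀ z, ‖φ z‖ ≤ C) ∧
      ε ^ d * ∑ z ∈ Bx ε a b, dens τ E0 V ω (aff F φ) z ≤ T + δ) :
    ∀ᶠ ε in 𝓝[>] (0 : ℝ), ∃ φ : Zd d → Rn n,
      ε ^ d * ∑ z ∈ Bx ε a b, ‖ε • φ z‖ ^ q ≤ δ ∧
      |ε ^ d * ∑ z ∈ Bx ε a b, dens τ E0 V ω (aff F φ) z - T| ≤ δ := by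
  have hlam' : ∀ᶠ ε in 𝓝[>] (0 : ℝ), 0 < T → ∃ z0 ∈ Bx ε a b, c0 ≤ lam (τ z0 ω) := by
    by_cases h : 0 < T
    · filter_upwards [hlam h] with ε hε _ using hε
    · exact Eventually.of_forall fun ε h' => absurd h' h
  have herr := (errN_tendsto (c₁ := c₁) (c0 := c0) (T := T) (C := C)
    (M := C + ‖F (toRd e)‖) hd (zero_lt_one.trans hp) hq
    (tendsto_card_Bx a b)).eventually_le_const hδ
  filter_upwards [hlam', herr, hub, self_mem_nhdsWithin] with ε h1 h2 h3 hε
  have hε : 0 < ε := hε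
  obtain ⟨φ, hφ, hE⟩ := h3
  have hM : 0 ≤ C + ‖F (toRd e)‖ := by positivity
  by_cases hle : T ≤ ε ^ d * ∑ z ∈ Bx ε a b, dens τ E0 V ω (aff F φ) z
  · refine ⟨φ, ?_, ?_⟩
    · refine (norm_bound (c₁ := c₁) (c0 := c0) (T := T) (M := C + ‖F (toRd e)‖) (r := 0) hp hq hqp hC hM hε
        (Bx ε a b) 0 φ (fun z _ => hφ z) le_rfl ?_ ?_).trans h2
      · rw [Real.zero_rpow (by linarith), mul_zero]
        positivity
      · have := hφ 0
        have := norm_nonneg (F (toRd e))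
        linarith
    · rw [abs_of_nonneg (by linarith)]
      linarith
  · have hlt := not_le.1 hle
    have hnn : 0 ≤ ε ^ d * ∑ z ∈ Bx ε a b, dens τ E0 V ω (aff F φ) z :=
      mul_nonneg (by positivity) (Finset.sum_nonneg fun z _ => dens_nonneg hVnn _ _ _)
    obtain ⟨z0, hz0, hlz⟩ := h1 (hnn.trans_lt hlt)
    obtain ⟨φ', hφ1, hφ2, r, hr, hrp, hz⟩ := perturb hn hp hc₁ hVcont hVnn lam e he he1 hlow F ω hε
      (Bx ε a b) hz0 hc0 hlz hT φ hφ hlt.le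
    refine ⟨φ', (norm_bound hp hq hqp hC hM hε (Bx ε a b) z0 φ'
      (fun z hz => by rw [hφ1 z hz]; exact hφ z) hr hrp hz).trans h2, ?_⟩
    rw [hφ2, sub_self, abs_zero]
    exact hδ.le

end perturb

section final

lemma diagonal {X : Type*} [Nonempty X] (D : ℝ → X → ℝ) (hD : ∀ ε, 0 < ε → ∀ u, 0 ≤ D ε u)
    (h : ∀ δ : ℝ, 0 < δ → ∀ᶠ ε in 𝓝[>] (0 : ℝ), ∃ u, D ε u ≤ δ) :
    ∃ u : ℝ → X, Tendsto (fun ε => D ε (u ε)) (𝓝[>] 0) (𝓝 0) := by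
  have h1 : ∀ ε : ℝ, ∃ u : X, 0 < ε → D ε u < (⨅ u, D ε u) + ε := by
    intro ε
    by_cases hε : 0 < ε
    · obtain ⟨u, hu⟩ := exists_lt_of_ciInf_lt (lt_add_of_pos_right (⨅ u, D ε u) hε)
      exact ⟨u, fun _ => hu⟩
    · exact ⟨Classical.arbitrary X, fun h => absurd h hε⟩
  choose u hu using h1
  refine ⟨u, ?_⟩
  rw [Metric.tendsto_nhds]
  intro η hη
  filter_upwards [h (η / 2) (half_pos hη), self_mem_nhdsWithin,
    nhdsWithin_le_nhds (Iio_mem_nhds (half_pos hη))] with ε h2 h3 h4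
  have h3 : 0 < ε := h3
  have h4 : ε < η / 2 := h4
  obtain ⟨x, hx⟩ := h2
  have h5 : ⨅ u, D ε u ≤ D ε x := ciInf_le ⟨0, by rintro _ ⟨y, rfl⟩; exact hD ε h3 y⟩ x
  have h6 := hu ε h3
  rw [Real.dist_eq, sub_zero, abs_of_nonneg (hD ε h3 _)]
  linarith

lemma vol_pos_point {d : ℕ} {Ω : Type*} {τ : Zd d → Ω → Ω} {lam : Ω → ℝ} {m : ℝ} (hm : 0 < m)
    (ω : Ω) (a b : Fin d → ℝ) (hv : 0 < vol a b)
    (h : Tendsto (fun ε => ε ^ d * ∑ z ∈ Bx ε a b, lam (τ z ω)) (𝓝[>] 0) (𝓝 (vol a b * m))) :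
    ∀ᶠ ε in 𝓝[>] (0 : ℝ), ∃ z0 ∈ Bx ε a b, m / 2 ≤ lam (τ z0 ω) := by
  have h1 := (tendsto_card_Bx a b).mul_const (m / 2)
  have h2 := h1.eventually_lt h (by nlinarith)
  filter_upwards [h2, self_mem_nhdsWithin] with ε hε hε0
  have hε0 : 0 < ε := hε0
  by_contra hcon
  push Not at hcon
  have h3 : ∑ z ∈ Bx ε a b, lam (τ z ω) ≤ (Bx ε a b).card * (m / 2) := by
    rw [← nsmul_eq_mul, ← Finset.sum_const]
    exact Finset.sum_le_sum fun z hz => (hcon z hz).le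
  have h4 := mul_le_mul_of_nonneg_left h3 (pow_pos hε0 d).le
  linarith

lemma norm_stdb {d : ℕ} (i : Fin d) : ‖toRd (stdb i)‖ = 1 := by
  have : toRd (stdb i) = EuclideanSpace.single i (1 : ℝ) := by
    ext j
    by_cases h : j = i <;> simp [stdb, h]
  rw [this]
  simp

lemma integrable_of_moment {Ω : Type*} [MeasurableSpace Ω] {P : Measure Ω} [IsProbabilityMeasure P]
    {l : Ω → ℝ} (hm : Measurable l) (h0 : ∀ ω, 0 ≤ l ω) {α : ℝ} (hα : 1 ≤ α)
    (h : ∫⁻ ω, ENNReal.ofReal (l ω ^ α) ∂P < ⊤) : Integrable l P := by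
  have h1 : Integrable (fun ω => l ω ^ α) P := by
    refine ⟨(hm.pow_const α).aestronglyMeasurable, ?_⟩
    rw [hasFiniteIntegral_iff_ofReal (ae_of_all _ fun ω => Real.rpow_nonneg (h0 ω) α)]
    exact h
  refine ((integrable_const (1 : ℝ)).add h1).mono' hm.aestronglyMeasurable (ae_of_all _ fun ω => ?_)
  rw [Real.norm_of_nonneg (h0 ω), Pi.add_apply]
  by_cases hl : l ω ≤ 1
  · have := Real.rpow_nonneg (h0 ω) α
    linarith
  · have := Real.self_le_rpow_of_one_le (not_le.1 hl).le hα
    linarith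

lemma integral_pos_of_moment {Ω : Type*} [MeasurableSpace Ω] {P : Measure Ω}
    [IsProbabilityMeasure P] {l : Ω → ℝ} (hm : Measurable l) (h0 : ∀ ω, 0 ≤ l ω)
    (hi : Integrable l P) {β : ℝ} (hβ : 0 < β)
    (h : ∫⁻ ω, ENNReal.ofReal (l ω) ^ (-β) ∂P < ⊤) : 0 < ∫ ω, l ω ∂P := by
  refine lt_of_le_of_ne (integral_nonneg h0) fun heq => ?_
  have h1 := (integral_eq_zero_iff_of_nonneg h0 hi).1 heq.symm
  have h2 := ae_lt_top ((hm.ennreal_ofReal).pow_const (-β)) h.ne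
  obtain ⟨ω, h3, h4⟩ := (h1.and h2).exists
  rw [h3] at h4
  simp [hβ] at h4

end final

/-- recovery sequence for affine limits, discrete form of Lemma 3.7. -/
theorem recovery_affine
    {d n : ℕ} (hd : 2 ≤ d) (hn : 1 ≤ n)
    {Ω : Type*} [MeasurableSpace Ω] (P : Measure Ω) [IsProbabilityMeasure P]
    (τ : Zd d → Ω → Ω) (hτ0 : τ 0 = id)
    (hτadd : ∀ x y : Zd d, τ (x + y) = τ x ∘ τ y)
    (hτmp : ∀ z : Zd d, MeasurePreserving (τ z) P P)
    (hτerg : ∀ B : Set Ω, MeasurableSet B → (∀ z : Zd d, τ z ⁻¹' B = B) → P B = 0 ∨ P B = 1)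
    (E0 : Finset (Zd d)) (hE00 : (0 : Zd d) ∉ E0) (hE0b : ∀ i : Fin d, stdb i ∈ E0)
    (p c₁ : ℝ) (hp : 1 < p) (hc₁ : 0 < c₁)
    (V : Zd d → Ω → Rn n → ℝ)
    (hVmeas : ∀ b ∈ E0, Measurable fun q : Ω × Rn n => V b q.1 q.2)
    (hVcont : ∀ b ∈ E0, ∀ ω : Ω, Continuous (V b ω))
    (hVnn : ∀ b ∈ E0, ∀ (ω : Ω) (r : Rn n), 0 ≤ V b ω r)
    (lam : Zd d → Ω → ℝ)
    (hlammeas : ∀ b ∈ E0, Measurable (lam b))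
    (hlamnn : ∀ b ∈ E0, ∀ ω : Ω, 0 ≤ lam b ω)
    (hgrowth : ∀ b ∈ E0, ∀ (ω : Ω) (r : Rn n),
      lam b ω * (‖r‖ ^ p / c₁ - c₁) ≤ V b ω r ∧ V b ω r ≤ c₁ * (1 + lam b ω * (‖r‖ ^ p + 1)))
    (α β : ℝ) (hα : 1 ≤ α) (hβ : 1 / (p - 1) ≤ β)
    (hmomα : ∀ b ∈ E0, ∫⁻ ω, ENNReal.ofReal (lam b ω ^ α) ∂P < ⊤)
    (hmomβ : ∀ i : Fin d, ∫⁻ ω, ENNReal.ofReal (lam (stdb i) ω) ^ (-β) ∂P < ⊤)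
    (F : Rd d →L[ℝ] Rn n) :
    ∃ Ω' : Set Ω, MeasurableSet Ω' ∧ P Ω' = 1 ∧
      ∀ ω ∈ Ω', ∀ a b : Fin d → ℝ,
        ∃ u : ℝ → Zd d → Rn n,
          Tendsto (fun ε : ℝ => ε ^ d * ∑' z : Zd d,
              if ε • toRd z ∈ halfBox a b then
                ‖u ε z - F (ε • toRd z)‖ ^ (p * β / (β + 1)) else 0)
            (𝓝[>] (0 : ℝ)) (𝓝 0) ∧
          Tendsto (fun ε : ℝ => energyE τ E0 V ε ω (u ε) (halfBox a b))
            (𝓝[>] (0 : ℝ)) (𝓝 ((volume (halfBox a b)).toReal * W0 P τ E0 V F)) := by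
  have hd0 : 0 < d := by omega
  have hβ0 : 0 < β := lt_of_lt_of_le (by apply one_div_pos.2; linarith) hβ
  have hp0 : 0 < p := zero_lt_one.trans hp
  set q := p * β / (β + 1) with hqdef
  have hq : 0 < q := by positivity
  have hqp : q ≤ p := by
    rw [hqdef, div_le_iff₀ (by positivity)]
    nlinarith
  have hlamI : ∀ b ∈ E0, Integrable (lam b) P := fun b hb =>
    integrable_of_moment (hlammeas b hb) (hlamnn b hb) hα (hmomα b hb)
  let i0 : Fin d := ⟨0, hd0⟩
  have he := hE0b i0
  set m := ∫ ω, lam (stdb i0) ω ∂P with hmdef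
  have hm : 0 < m := integral_pos_of_moment (hlammeas _ he) (hlamnn _ he) (hlamI _ he) hβ0 (hmomβ i0)
  have hcell := fun N : ℕ => cell_W0 hτmp hVmeas hVcont hVnn hlamI
    (fun b hb ω r => (hgrowth b hb ω r).2) F (1 / ((N : ℝ) + 1)) (by positivity)
  choose k f C hk hf hφ hlt using hcell
  have hae1 : ∀ᵐ ω ∂P, ∀ N : ℕ, ∀ a b, Tendsto (fun ε => ε ^ d * ∑ z ∈ Bx ε a b, f N (τ z ω))
      (𝓝[>] 0) (𝓝 (vol a b * ∫ ω, f N ω ∂P)) :=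
    ae_all_iff.2 fun N => ergodic_thm hτ0 hτadd hτmp hτerg (hf N)
  have hae2 : ∀ᵐ ω ∂P, ∀ a b, Tendsto (fun ε => ε ^ d * ∑ z ∈ Bx ε a b, lam (stdb i0) (τ z ω))
      (𝓝[>] 0) (𝓝 (vol a b * m)) :=
    ergodic_thm hτ0 hτadd hτmp hτerg (hlamI _ he)
  obtain ⟨Ω', hΩ', hΩm, hΩ⟩ := (hae1.and hae2).exists_measurable_mem
  refine ⟨Ω', hΩm, ?_, ?_⟩
  · rw [← prob_compl_eq_zero_iff hΩm]
    exact mem_ae_iff.1 hΩ'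
  intro ω hω a b
  obtain ⟨hg1, hg2⟩ := hΩ ω hω
  have hW := W0_nonneg (τ := τ) hVnn P F
  set T := vol a b * W0 P τ E0 V F with hTdef
  have hT : 0 ≤ T := mul_nonneg (vol_nonneg a b) hW
  let D : ℝ → (Zd d → Rn n) → ℝ := fun ε φ => ε ^ d * ∑ z ∈ Bx ε a b, ‖ε • φ z‖ ^ q
    + |ε ^ d * ∑ z ∈ Bx ε a b, dens τ E0 V ω (aff F φ) z - T|
  have hN0 : ∀ ε : ℝ, 0 < ε → ∀ φ : Zd d → Rn n,
      0 ≤ ε ^ d * ∑ z ∈ Bx ε a b, ‖ε • φ z‖ ^ q := fun ε hε φ =>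
    mul_nonneg (by positivity) (Finset.sum_nonneg fun z _ => by positivity)
  obtain ⟨φ, hφlim⟩ := diagonal D (fun ε hε φ => add_nonneg (hN0 ε hε φ) (abs_nonneg _)) (by
    intro δ hδ
    obtain ⟨N, hN⟩ := exists_nat_one_div_lt
      (show (0 : ℝ) < δ / 2 / (vol a b + 1) by have := vol_nonneg a b; positivity)
    have hS : ((k N : ℝ) ^ d)⁻¹ * (vol a b * ∫ ω, f N ω ∂P) < T + δ / 2 := by
      rw [mul_left_comm]
      have hv := vol_nonneg a b
      have h1 := mul_le_mul_of_nonneg_left (hlt N).le hv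
      rw [lt_div_iff₀ (by positivity)] at hN
      have h2 : (0 : ℝ) < 1 / ((N : ℝ) + 1) := by positivity
      nlinarith
    have hub := upper_bound hτadd hVnn F (hk N) (f N) (C N) _ (hφ N) ω (hg1 N) a b _ hS
    have hC : 0 ≤ C N := by
      obtain ⟨φ, h, _⟩ := hφ N ω
      exact (norm_nonneg _).trans (h 0)
    have happ := approx hd0 hn hp hq hqp hc₁ hVcont hVnn (lam (stdb i0)) (stdb i0) he
      (norm_stdb i0) (fun ω r => (hgrowth _ he ω r).1) F ω a b (half_pos hm) hT
      (fun hT0 => vol_pos_point hm ω a b (pos_of_mul_pos_left hT0 hW) (hg2 a b))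
      (half_pos hδ) hC hub
    filter_upwards [happ] with ε hε
    obtain ⟨φ, h1, h2⟩ := hε
    exact ⟨φ, by simp only [D]; linarith⟩)
  refine ⟨fun ε z => ε • aff F (φ ε) z, ?_, ?_⟩
  · refine squeeze_zero' ?_ ?_ hφlim
    · filter_upwards [self_mem_nhdsWithin] with ε hε
      refine mul_nonneg (pow_pos hε d).le (tsum_nonneg fun z => ?_)
      split_ifs <;> positivity
    · filter_upwards [self_mem_nhdsWithin] with ε hε
      have hε : 0 < ε := hε
      rw [tsum_Bx hε a b (fun z => ‖ε • aff F (φ ε) z - F (ε • toRd z)‖ ^ q)]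
      have h1 : ∀ z, ε • aff F (φ ε) z - F (ε • toRd z) = ε • φ ε z := by
        intro z
        rw [map_smul, ← smul_sub, aff, add_sub_cancel_left]
      simp only [h1, D]
      exact le_add_of_nonneg_right (abs_nonneg _)
  · rw [volume_halfBox, tendsto_iff_dist_tendsto_zero]
    refine squeeze_zero' (Eventually.of_forall fun ε => dist_nonneg) ?_ hφlim
    filter_upwards [self_mem_nhdsWithin] with ε hε
    have hε : 0 < ε := hε
    unfold energyE
    rw [tsum_Bx hε a b (fun z => ∑ b ∈ E0, V b (τ z ω) ((ε * ‖toRd b‖)⁻¹ •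
      (ε • aff F (φ ε) (z + b) - ε • aff F (φ ε) z)))]
    have h1 : ∀ z b, (ε * ‖toRd b‖)⁻¹ • (ε • aff F (φ ε) (z + b) - ε • aff F (φ ε) z)
        = (‖toRd b‖)⁻¹ • (aff F (φ ε) (z + b) - aff F (φ ε) z) := by
      intro z b
      rw [← smul_sub, smul_smul, mul_inv, mul_comm ε⁻¹, mul_assoc, inv_mul_cancel₀ hε.ne', mul_one]
    simp only [h1]
    rw [Real.dist_eq]
    exact le_add_of_nonneg_left (hN0 ε hε _)


end StochHom
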